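/- arXiv:1106.0082 — 5 statements merged into one kernel-verified Lean document; each statement's English description precedes it below -/
import Mathlib

section
/- Let F be a differential field of characteristic zero with derivation ∂ and constants C = {c ∈ F : ∂c = 0}. Let M : F^ℓ → F^ℓ be the ℓ×ℓ matrix differential operator (Mu)_i = Σ_{j=1}^ℓ Σ_{n≥0} a_{ij,n} ∂^n u_j with coefficients a_{ij,n} ∈ F (finitely many nonzero), and let N_1,…,N_ℓ, h_1,…,h_ℓ ∈ ℤ≥0 be such that a_{ij,n} = 0 whenever n > N_j − h_i (a majorant of M). Assume that the leading matrix Ā = (ā_{ij}) ∈ Mat_{ℓ×ℓ}(F), where ā_{ij} = a_{ij, N_j−h_i} if N_j − h_i ≥ 0 and ā_{ij} = 0 otherwise, is invertible. Then the space of solutions of the homogeneous system Mu = 0 satisfies dim_C {u ∈ F^ℓ : Mu = 0} ≤ d := Σ_{j=1}^ℓ (N_j − h_j). If moreover F is linearly closed, then M : F^ℓ → F^ℓ is surjective (so the inhomogeneous system Mu = b has a solution for every b ∈ F^ℓ) and dim_C {u ∈ F^ℓ : Mu = 0} = d. -/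
/-- A derivation on a field: an additive map satisfying the Leibniz rule. -/
structure IsDerivation {F : Type*} [Field F] (d : F → F) : Prop where
  map_add : ∀ a b : F, d (a + b) = d a + d b
  leibniz : ∀ a b : F, d (a * b) = d a * b + a * d b

/-- A differential field `(F, d)` is linearly closed if every linear differential equation
`a_M d^M u + ⋯ + a_1 d u + a_0 u = b` with `a_M ≠ 0` has a solution in `F`,
and has a nonzero solution for `b = 0`, provided that `M ≥ 1`. -/
def LinearlyClosed {F : Type*} [Field F] (d : F → F) : Prop :=
  ∀ (M : ℕ) (a : ℕ → F), a M ≠ 0 →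
    (∀ b : F, ∃ u : F, ∑ n ∈ Finset.range (M + 1), a n * d^[n] u = b) ∧
    (1 ≤ M → ∃ u : F, u ≠ 0 ∧ ∑ n ∈ Finset.range (M + 1), a n * d^[n] u = 0)


namespace LinSys

section basic
variable {F : Type*} [Field F] {d : F → F}

lemma d_zero (hd : IsDerivation d) : d 0 = 0 := by
  have := hd.map_add 0 0
  simpa using this

lemma d_one (hd : IsDerivation d) : d 1 = 0 := by
  have := hd.leibniz 1 1
  simpa using this

lemma d_neg (hd : IsDerivation d) (x : F) : d (-x) = - d x := by
  have := hd.map_add x (-x)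
  rw [add_neg_cancel, d_zero hd] at this
  exact (neg_eq_of_add_eq_zero_right this.symm).symm

lemma d_sub (hd : IsDerivation d) (x y : F) : d (x - y) = d x - d y := by
  rw [sub_eq_add_neg, hd.map_add, d_neg hd, ← sub_eq_add_neg]

lemma d_sum (hd : IsDerivation d) {ι : Type*} (s : Finset ι) (f : ι → F) :
    d (∑ i ∈ s, f i) = ∑ i ∈ s, d (f i) := by
  classical
  induction s using Finset.induction_on with
  | empty => simp [d_zero hd]
  | insert a s ha ih => rw [Finset.sum_insert ha, Finset.sum_insert ha, hd.map_add, ih]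

lemma it_add (hd : IsDerivation d) (n : ℕ) (x y : F) : d^[n] (x + y) = d^[n] x + d^[n] y := by
  induction n with
  | zero => rfl
  | succ n ih => simp only [Function.iterate_succ_apply', ih, hd.map_add]

lemma it_sub (hd : IsDerivation d) (n : ℕ) (x y : F) : d^[n] (x - y) = d^[n] x - d^[n] y := by
  induction n with
  | zero => rfl
  | succ n ih => simp only [Function.iterate_succ_apply', ih, d_sub hd]

lemma it_mul (hd : IsDerivation d) (n : ℕ) (c x : F) (hc : d c = 0) :
    d^[n] (c * x) = c * d^[n] x := by
  induction n with
  | zero => rfl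
  | succ n ih => simp [Function.iterate_succ_apply', ih, hd.leibniz, hc]

/-- Coefficients of the operator composed with the derivation on the left. -/
def DD (d : F → F) (a : ℕ → F) : ℕ → F
  | 0 => d (a 0)
  | n + 1 => d (a (n + 1)) + a n

lemma d_op (hd : IsDerivation d) (a : ℕ → F) (N : ℕ) (ha : a N = 0) (u : F) :
    d (∑ n ∈ Finset.range (N + 1), a n * d^[n] u) =
      ∑ n ∈ Finset.range (N + 1), DD d a n * d^[n] u := by
  have h1 : ∑ n ∈ Finset.range (N + 1), a n * d^[n+1] u
      = ∑ n ∈ Finset.range N, a n * d^[n+1] u := by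
    rw [Finset.sum_range_succ, ha]; simp
  rw [d_sum hd]
  simp only [hd.leibniz, Finset.sum_add_distrib, ← Function.iterate_succ_apply' d]
  rw [h1, Finset.sum_range_succ' (fun n => DD d a n * d^[n] u),
    Finset.sum_range_succ' (fun n => d (a n) * d^[n] u)]
  simp only [DD, add_mul, Finset.sum_add_distrib]
  ring

/-- Auxiliary recursion for the adjoint equation. -/
def PP (d : F → F) (c : ℕ → F) (z : F) : ℕ → F
  | 0 => z
  | k + 1 => -(d (PP d c z k) + c k * z)

lemma PP_op (hd : IsDerivation d) (c : ℕ → F) (k : ℕ) :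
    ∃ b : ℕ → F, b k ≠ 0 ∧ (∀ n, k < n → b n = 0) ∧
      ∀ z, PP d c z k = ∑ n ∈ Finset.range (k + 1), b n * d^[n] z := by
  induction k with
  | zero =>
    refine ⟨fun n => if n = 0 then 1 else 0, by simp, ?_, ?_⟩
    · intro n hn; simp; omega
    · intro z; simp [PP]
  | succ k ih =>
    obtain ⟨b, hb, hb0, hP⟩ := ih
    refine ⟨fun n => -(DD d b n + if n = 0 then c k else 0), ?_, ?_, ?_⟩
    · simp [DD, hb0 (k+1) (by omega), d_zero hd, hb]
    · intro n hn
      obtain ⟨m, rfl⟩ : ∃ m, n = m + 1 := ⟨n - 1, by omega⟩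
      simp [DD, hb0 (m+1) (by omega), hb0 m (by omega), d_zero hd]
    · intro z
      have h2 : PP d c z k = ∑ n ∈ Finset.range (k + 1 + 1), b n * d^[n] z := by
        rw [Finset.sum_range_succ, hb0 (k+1) (by omega), hP]; simp
      simp only [PP]
      rw [h2, d_op hd b (k+1) (hb0 _ (by omega))]
      simp only [neg_mul, add_mul, Finset.sum_neg_distrib, Finset.sum_add_distrib]
      congr 2
      simp

end basic

section conn
variable {F : Type*} [Field F] {d : F → F} {V : Type*} [AddCommGroup V] [Module F V]

/-- A connection. -/
structure IsConn (d : F → F) (nab : V → V) : Prop where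
  add : ∀ x y, nab (x + y) = nab x + nab y
  smul : ∀ (f : F) x, nab (f • x) = d f • x + f • nab x

lemma IsConn.zero {nab : V → V} (hn : IsConn d nab) : nab 0 = 0 := by
  simpa using hn.add 0 0

lemma IsConn.sum {nab : V → V} (hn : IsConn d nab) {ι : Type*} (s : Finset ι) (f : ι → V) :
    nab (∑ i ∈ s, f i) = ∑ i ∈ s, nab (f i) := by
  classical
  induction s using Finset.induction_on with
  | empty => simp [hn.zero]
  | insert a s ha ih => rw [Finset.sum_insert ha, Finset.sum_insert ha, hn.add, ih]

lemma IsConn.sub {nab : V → V} (hn : IsConn d nab) (x y : V) : nab (x - y) = nab x - nab y := by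
  have := hn.add (x - y) y
  rw [sub_add_cancel] at this
  rw [this, add_sub_cancel_right]

/-- Filtration by iterates. -/
def UU (H : Submodule F V) (w : ℕ → V) (m : ℕ) : Submodule F V where
  carrier := {x | ∃ c : ℕ → F, x - ∑ i ∈ Finset.range m, c i • w i ∈ H}
  add_mem' := by
    rintro x y ⟨c, hc⟩ ⟨c', hc'⟩
    refine ⟨c + c', ?_⟩
    have := H.add_mem hc hc'
    simp only [Pi.add_apply, add_smul, Finset.sum_add_distrib]
    convert this using 1
    abel
  zero_mem' := ⟨0, by simp⟩
  smul_mem' := by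
    rintro f x ⟨c, hc⟩
    refine ⟨fun i => f * c i, ?_⟩
    have := H.smul_mem f hc
    simpa [smul_sub, Finset.smul_sum, mul_smul] using this

lemma UU_mono (H : Submodule F V) (w : ℕ → V) : Monotone (UU H w) := by
  apply monotone_nat_of_le_succ
  rintro m x ⟨c, hc⟩
  refine ⟨fun i => if i < m then c i else 0, ?_⟩
  rw [Finset.sum_range_succ]
  convert hc using 2
  simp only [lt_irrefl, if_false, zero_smul, add_zero]
  apply Finset.sum_congr rfl
  intro i hi
  rw [if_pos (Finset.mem_range.1 hi)]

lemma exists_horiz_mod (hd : IsDerivation d) (hLC : LinearlyClosed d) [FiniteDimensional F V]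
    {nab : V → V} (hn : IsConn d nab) (H : Submodule F V) (hH : ∀ v ∈ H, nab v ∈ H)
    (hne : H ≠ ⊤) : ∃ w, w ∉ H ∧ nab w ∈ H := by
  classical
  obtain ⟨v, hv⟩ : ∃ v, v ∉ H := by
    by_contra! h
    exact hne (Submodule.eq_top_iff'.2 h)
  let w : ℕ → V := fun i => nab^[i] v
  have hex : ∃ m, w m ∈ UU H w m := by
    obtain ⟨n, hn⟩ := monotone_stabilizes_iff_noetherian.2
      (inferInstance : IsNoetherian F V) ⟨UU H w, UU_mono H w⟩
    refine ⟨n, ?_⟩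
    have := hn (n+1) (by omega)
    simp only [OrderHom.coe_mk] at this
    rw [this]
    refine ⟨fun i => if i = n then 1 else 0, ?_⟩
    simp
  obtain ⟨c, hc⟩ := Nat.find_spec hex
  have hmin := fun k (hk : k < Nat.find hex) => Nat.find_min hex hk
  generalize Nat.find hex = m at hc hmin
  obtain _ | p := m
  · exact absurd (by simpa [w] using hc) hv
  have hp := hmin p (by omega)
  obtain ⟨b, hb, -, hP⟩ := PP_op hd (fun k => c (p - k)) (p + 1)
  obtain ⟨z, hz, hz0⟩ := (hLC (p+1) b hb).2 (by omega)
  rw [← hP] at hz0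
  let y : ℕ → F := fun i => PP d (fun k => c (p - k)) z (p - i)
  have hyp : y p = z := by simp [y, PP]
  have hy0 : d (y 0) + c 0 * z = 0 := by
    simpa [y, PP, ← neg_add, -neg_add_rev] using hz0
  have hys : ∀ i < p, d (y (i+1)) + c (i+1) * z + y i = 0 := by
    intro i hi
    have e : p - i = (p - (i+1)) + 1 := by omega
    simp only [y]
    rw [e]
    simp only [PP]
    rw [show p - (p - (i+1)) = i + 1 by omega]
    ring
  refine ⟨∑ i ∈ Finset.range (p+1), y i • w i, ?_, ?_⟩
  · intro hmem
    apply hp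
    rw [Finset.sum_range_succ, hyp] at hmem
    refine ⟨fun i => - z⁻¹ * y i, ?_⟩
    have := H.smul_mem z⁻¹ hmem
    simp only [smul_add, smul_smul, inv_mul_cancel₀ hz, one_smul, Finset.smul_sum] at this
    simp only [neg_mul, neg_smul, Finset.sum_neg_distrib, sub_neg_eq_add]
    rwa [add_comm]
  · have h1 : nab (∑ i ∈ Finset.range (p+1), y i • w i)
        = z • (w (p+1) - ∑ i ∈ Finset.range (p+1), c i • w i) := by
      rw [hn.sum]
      simp only [hn.smul]
      have hw : ∀ i, nab (w i) = w (i+1) := fun i => (Function.iterate_succ_apply' nab i v).symm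
      simp only [hw, Finset.sum_add_distrib]
      rw [Finset.sum_range_succ (fun i => y i • w (i+1)), hyp,
        Finset.sum_range_succ' (fun i => d (y i) • w i),
        Finset.sum_range_succ' (fun i => c i • w i), smul_sub, smul_add, Finset.smul_sum]
      have h3 : ∑ i ∈ Finset.range p, d (y (i+1)) • w (i+1) + ∑ i ∈ Finset.range p, y i • w (i+1)
          = - ∑ i ∈ Finset.range p, z • c (i+1) • w (i+1) := by
        rw [← Finset.sum_neg_distrib, ← Finset.sum_add_distrib]
        apply Finset.sum_congr rfl
        intro i hi
        have := hys i (Finset.mem_range.1 hi)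
        rw [← add_smul, smul_smul, ← neg_smul]
        congr 1
        linear_combination this
      have h4 : d (y 0) • w 0 = - (z • c 0 • w 0) := by
        rw [smul_smul, ← neg_smul]
        congr 1
        linear_combination hy0
      rw [h4]
      rw [← sub_eq_zero] at h3 ⊢
      rw [← h3]
      abel
    rw [h1]
    exact H.smul_mem _ hc

lemma horiz_surj (hd : IsDerivation d) (hLC : LinearlyClosed d)
    {nab : V → V} (hn : IsConn d nab) (y : V) (hy : y ∈ Submodule.span F {v | nab v = 0}) :
    ∃ x ∈ Submodule.span F {v | nab v = 0}, nab x = y := by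
  suffices h : ∀ f : F, ∃ x ∈ Submodule.span F {v | nab v = 0}, nab x = f • y by
    simpa using h 1
  induction hy using Submodule.span_induction with
  | mem v hv =>
    intro f
    obtain ⟨g, hg⟩ := (hLC 1 (fun n => if n = 1 then 1 else 0) (by simp)).1 f
    refine ⟨g • v, Submodule.smul_mem _ _ (Submodule.subset_span hv), ?_⟩
    have hv' : nab v = 0 := hv
    have hg' : d g = f := by simpa using hg
    rw [hn.smul, hv', hg']; simp
  | zero => intro f; exact ⟨0, Submodule.zero_mem _, by simp [hn.zero]⟩
  | add x y _ _ hx hy =>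
    intro f
    obtain ⟨x', h1, h2⟩ := hx f
    obtain ⟨y', h3, h4⟩ := hy f
    exact ⟨x' + y', Submodule.add_mem _ h1 h3, by rw [hn.add, h2, h4, smul_add]⟩
  | smul g x _ hx =>
    intro f
    obtain ⟨x', h1, h2⟩ := hx (f * g)
    exact ⟨x', h1, by rw [h2, mul_smul]⟩

lemma horiz_span (hd : IsDerivation d) (hLC : LinearlyClosed d) [FiniteDimensional F V]
    {nab : V → V} (hn : IsConn d nab) : Submodule.span F {v | nab v = 0} = ⊤ := by
  by_contra hne
  obtain ⟨w, hw, hw'⟩ := exists_horiz_mod hd hLC hn _ (by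
    intro v hv
    induction hv using Submodule.span_induction with
    | mem v hv =>
      have hv' : nab v = 0 := hv
      rw [hv']; exact Submodule.zero_mem _
    | zero => rw [hn.zero]; exact Submodule.zero_mem _
    | add x y _ _ hx hy => rw [hn.add]; exact Submodule.add_mem _ hx hy
    | smul g x hx0 hx =>
      rw [hn.smul]
      exact Submodule.add_mem _ (Submodule.smul_mem _ _ hx0) (Submodule.smul_mem _ _ hx)) hne
  obtain ⟨x, hx, hxw⟩ := horiz_surj hd hLC hn _ hw'
  apply hw
  have : w - x ∈ Submodule.span F {v | nab v = 0} :=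
    Submodule.subset_span (by simp [hn.sub, hxw])
  simpa using Submodule.add_mem _ this hx

lemma horiz_indep (hd : IsDerivation d) (C : Subfield F) (hC : ∀ x : F, x ∈ C ↔ d x = 0)
    {nab : V → V} (hn : IsConn d nab) {ι : Type*} (v : ι → V) (hv : ∀ i, nab (v i) = 0)
    (hli : LinearIndependent C v) : LinearIndependent F v := by
  classical
  rw [linearIndependent_iff']
  intro s
  induction s using Finset.induction_on with
  | empty => simp
  | insert a s ha ih =>
    intro f hf
    by_cases h0 : f a = 0
    · rw [Finset.sum_insert ha, h0, zero_smul, zero_add] at hf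
      intro i hi
      rcases Finset.mem_insert.1 hi with rfl | hi
      · exact h0
      · exact ih f hf i hi
    · exfalso
      let g : ι → F := fun i => (f a)⁻¹ * f i
      have hga : g a = 1 := inv_mul_cancel₀ h0
      have hg : ∑ i ∈ insert a s, g i • v i = 0 := by
        simp only [g, mul_smul, ← Finset.smul_sum, hf, smul_zero]
      have h1 : ∑ i ∈ insert a s, d (g i) • v i = 0 := by
        have := congrArg nab hg
        rw [hn.sum, hn.zero] at this
        simpa [hn.smul, hv] using this
      rw [Finset.sum_insert ha, hga, d_one hd, zero_smul, zero_add] at h1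
      have h2 := ih _ h1
      have h3 : ∀ i, i ∈ insert a s → g i ∈ C := by
        intro i hi
        rw [hC]
        rcases Finset.mem_insert.1 hi with rfl | hi
        · rw [hga, d_one hd]
        · exact h2 i hi
      let g' : ι → C := fun i => if h : i ∈ insert a s then ⟨g i, h3 i h⟩ else 0
      have h4 : ∑ i ∈ insert a s, g' i • v i = 0 := by
        rw [← hg]
        apply Finset.sum_congr rfl
        intro i hi
        simp only [g', dif_pos hi]
        rfl
      have h5 := linearIndependent_iff'.1 hli _ g' h4 a (Finset.mem_insert_self _ _)
      simp only [g', dif_pos (Finset.mem_insert_self a s)] at h5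
      have := congrArg Subtype.val h5
      simp [hga] at this

end conn

section jets
variable {F : Type*} [Field F] {d : F → F} {l : ℕ}

lemma DD_supp (hd : IsDerivation d) (a : ℕ → F) (s : ℤ) (ha : ∀ n : ℕ, s < n → a n = 0)
    (k : ℕ) : ∀ n : ℕ, s + k < n → (DD d)^[k] a n = 0 := by
  induction k with
  | zero => intro n hn; exact ha n (by simpa using hn)
  | succ k ih =>
    intro n hn
    rw [Function.iterate_succ_apply']
    push_cast at hn
    obtain _ | m := n
    · simp only [DD]
      rw [ih 0 (by push_cast at hn ⊢; omega), d_zero hd]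
    · simp only [DD]
      push_cast at hn
      rw [ih m (by omega), ih (m+1) (by push_cast; omega), d_zero hd, add_zero]

lemma DD_lead (hd : IsDerivation d) (a : ℕ → F) (N h : ℕ)
    (ha : ∀ n : ℕ, (N : ℤ) - (h : ℤ) < n → a n = 0) (A : F)
    (hA : A = if h ≤ N then a (N - h) else 0)
    (k : ℕ) : ∀ n : ℕ, n + h = N + k → (DD d)^[k] a n = A := by
  induction k with
  | zero =>
    intro n hn
    rw [hA, if_pos (by omega), show N - h = n by omega]; rfl
  | succ k ih =>
    intro n hn
    rw [Function.iterate_succ_apply']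
    obtain _ | m := n
    · simp only [DD]
      rw [DD_supp hd a _ ha k 0 (by push_cast; omega), d_zero hd, hA, if_neg (by omega)]
    · simp only [DD]
      rw [DD_supp hd a _ ha k (m+1) (by push_cast; omega), d_zero hd, zero_add, ih m (by omega)]

/-- The matrix differential operator. -/
def Mop (d : F → F) (N : Fin l → ℕ) (a : Fin l → Fin l → ℕ → F) (u : Fin l → F) (i : Fin l) : F :=
  ∑ j, ∑ n ∈ Finset.range (N j + 1), a i j n * d^[n] (u j)

/-- The jet of a vector function. -/
def jet (d : F → F) (N : Fin l → ℕ) (u : Fin l → F) : (Σ j : Fin l, Fin (N j)) → F :=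
  fun p => d^[(p.2 : ℕ)] (u p.1)

lemma sum_jet (N : Fin l → ℕ) (g : Fin l → ℕ → F) (u : Fin l → F) :
    ∑ j, ∑ n ∈ Finset.range (N j), g j n * d^[n] (u j)
      = ∑ p : (Σ j : Fin l, Fin (N j)), g p.1 p.2 * jet d N u p := by
  rw [Fintype.sum_sigma]
  refine Finset.sum_congr rfl fun j _ => ?_
  rw [Finset.sum_range]
  rfl

lemma it_Mop (hd : IsDerivation d) (N h : Fin l → ℕ) (a : Fin l → Fin l → ℕ → F)
    (hmaj : ∀ i j (n : ℕ), (N j : ℤ) - (h i : ℤ) < (n : ℤ) → a i j n = 0)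
    (u : Fin l → F) (i : Fin l) (k : ℕ) (hk : k ≤ h i) :
    d^[k] (Mop d N a u i) = ∑ j, ∑ n ∈ Finset.range (N j + 1), (DD d)^[k] (a i j) n * d^[n] (u j) := by
  induction k with
  | zero => rfl
  | succ k ih =>
    rw [Function.iterate_succ_apply', ih (by omega), d_sum hd]
    refine Finset.sum_congr rfl fun j _ => ?_
    rw [d_op hd _ _ (DD_supp hd _ _ (hmaj i j) k (N j) (by omega))]
    simp only [Function.iterate_succ_apply']

/-- The prolongation matrix. -/
def GG (d : F → F) (N h : Fin l → ℕ) (a : Fin l → Fin l → ℕ → F) :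
    Matrix (Σ i : Fin l, Fin (h i)) (Σ j : Fin l, Fin (N j)) F :=
  fun q p => (DD d)^[(q.2 : ℕ)] (a q.1 p.1) p.2

/-- Lower order part. -/
def LL (N : Fin l → ℕ) (a : Fin l → Fin l → ℕ → F) :
    Matrix (Fin l) (Σ j : Fin l, Fin (N j)) F :=
  fun i p => a i p.1 p.2

lemma GG_jet (hd : IsDerivation d) (N h : Fin l → ℕ) (a : Fin l → Fin l → ℕ → F)
    (hmaj : ∀ i j (n : ℕ), (N j : ℤ) - (h i : ℤ) < (n : ℤ) → a i j n = 0)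
    (u : Fin l → F) (q : Σ i : Fin l, Fin (h i)) :
    (Matrix.mulVec (GG d N h a) (jet d N u)) q = d^[(q.2 : ℕ)] (Mop d N a u q.1) := by
  rw [it_Mop hd N h a hmaj u q.1 q.2 q.2.2.le]
  simp only [Matrix.mulVec, dotProduct, GG]
  rw [← sum_jet N (fun j n => (DD d)^[(q.2 : ℕ)] (a q.1 j) n) u]
  refine Finset.sum_congr rfl fun j _ => ?_
  have := q.2.2
  rw [Finset.sum_range_succ, DD_supp hd _ _ (hmaj q.1 j) q.2 (N j) (by omega)]
  simp

lemma Mop_top (N : Fin l → ℕ) (a : Fin l → Fin l → ℕ → F) (u : Fin l → F) :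
    Mop d N a u = Matrix.mulVec (fun i j => a i j (N j)) (fun j => d^[N j] (u j))
      + Matrix.mulVec (LL N a) (jet d N u) := by
  ext i
  simp only [Mop, Finset.sum_range_succ, Finset.sum_add_distrib, Pi.add_apply, Matrix.mulVec,
    dotProduct, LL]
  rw [sum_jet N (a i) u, add_comm]

lemma GG_indep (hd : IsDerivation d) (N h : Fin l → ℕ) (a : Fin l → Fin l → ℕ → F)
    (hmaj : ∀ i j (n : ℕ), (N j : ℤ) - (h i : ℤ) < (n : ℤ) → a i j n = 0)
    (Abar : Matrix (Fin l) (Fin l) F)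
    (hAbar : ∀ i j, Abar i j = if h i ≤ N j then a i j (N j - h i) else 0)
    (hinv : IsUnit Abar) : LinearIndependent F (GG d N h a).row := by
  rw [Fintype.linearIndependent_iff]
  intro c hc
  suffices H : ∀ r : ℕ, ∀ q : (Σ i : Fin l, Fin (h i)), (q.2 : ℕ) + r = h q.1 → c q = 0 by
    intro q
    exact H (h q.1 - q.2) q (by have := q.2.2; omega)
  intro r
  induction r using Nat.strong_induction_on with
  | _ r ih =>
  intro q0 hq0
  have hr : 1 ≤ r := by have := q0.2.2; omega
  let e : Fin l → F := fun i => if hi : r ≤ h i then c ⟨i, ⟨h i - r, by omega⟩⟩ else 0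
  have he : Matrix.vecMul e Abar = 0 := by
    ext j
    simp only [Matrix.vecMul, dotProduct, Pi.zero_apply]
    by_cases hj : r ≤ N j
    · have h1 := congrFun hc ⟨j, ⟨N j - r, by omega⟩⟩
      simp only [Finset.sum_apply, Pi.smul_apply, Matrix.row, GG, smul_eq_mul, Pi.zero_apply] at h1
      rw [Fintype.sum_sigma] at h1
      rw [← h1]
      refine Finset.sum_congr rfl fun i _ => ?_
      symm
      by_cases hi : r ≤ h i
      · rw [Finset.sum_eq_single (⟨h i - r, by omega⟩ : Fin (h i))]
        · simp only [e, dif_pos hi]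
          rw [DD_lead hd (a i j) (N j) (h i) (hmaj i j) _ (hAbar i j) _ _ (by omega)]
        · intro k _ hk
          have hk' : (k : ℕ) ≠ h i - r := fun hh => hk (Fin.ext hh)
          have hk2 := k.2
          by_cases hlt : (k : ℕ) < h i - r
          · rw [DD_supp hd (a i j) _ (hmaj i j) k _ (by omega), mul_zero]
          · rw [ih (h i - k) (by omega) ⟨i, k⟩ (by simp), zero_mul]
        · simp
      · simp only [e, dif_neg hi, zero_mul]
        refine Finset.sum_eq_zero fun k _ => ?_
        have hk2 := k.2
        rw [ih (h i - k) (by omega) ⟨i, k⟩ (by simp), zero_mul]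
    · refine Finset.sum_eq_zero fun i _ => ?_
      by_cases hi : r ≤ h i
      · rw [hAbar, if_neg (by omega), mul_zero]
      · simp [e, hi]
  have he0 : e = 0 := by
    have hh := Matrix.mul_nonsing_inv Abar ((Matrix.isUnit_iff_isUnit_det _).1 hinv)
    have := congrArg (fun v => Matrix.vecMul v Abar⁻¹) he
    simpa [Matrix.vecMul_vecMul, hh] using this
  have := congrFun he0 q0.1
  simp only [e, dif_pos (show r ≤ h q0.1 by omega), Pi.zero_apply] at this
  rw [← this]
  congr 1
  obtain ⟨i, k⟩ := q0
  simp only at hq0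
  congr 1
  ext
  simp
  omega

/-- Jet connection. -/
def nabJ (d : F → F) (N : Fin l → ℕ) (B : Matrix (Fin l) (Σ j : Fin l, Fin (N j)) F)
    (Y : (Σ j : Fin l, Fin (N j)) → F) : (Σ j : Fin l, Fin (N j)) → F :=
  fun p => d (Y p) - if hp : (p.2 : ℕ) + 1 < N p.1 then Y ⟨p.1, ⟨p.2 + 1, hp⟩⟩
    else (Matrix.mulVec B Y) p.1

lemma nabJ_conn (hd : IsDerivation d) (N : Fin l → ℕ)
    (B : Matrix (Fin l) (Σ j : Fin l, Fin (N j)) F) : IsConn d (nabJ d N B) where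
  add x y := by
    ext p
    simp only [nabJ, Pi.add_apply, hd.map_add, Matrix.mulVec_add]
    split_ifs <;> ring
  smul f x := by
    ext p
    simp only [nabJ, Pi.add_apply, Pi.smul_apply, smul_eq_mul, hd.leibniz, Matrix.mulVec_smul]
    split_ifs <;> ring

lemma nabJ_jet (N : Fin l → ℕ) (B : Matrix (Fin l) (Σ j : Fin l, Fin (N j)) F)
    (u : Fin l → F) (hu : ∀ j, d^[N j] (u j) = Matrix.mulVec B (jet d N u) j) :
    nabJ d N B (jet d N u) = 0 := by
  ext ⟨j, n⟩
  simp only [nabJ, Pi.zero_apply]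
  have hn := n.2
  have e : d (jet d N u ⟨j, n⟩) = d^[(n : ℕ) + 1] (u j) := by
    rw [Function.iterate_succ_apply']; rfl
  rw [e]
  split_ifs with hp
  · simp [jet]
  · rw [← hu j, show (n : ℕ) + 1 = N j by omega, sub_self]

lemma jet_recon (N : Fin l → ℕ) (B : Matrix (Fin l) (Σ j : Fin l, Fin (N j)) F)
    (Y : (Σ j : Fin l, Fin (N j)) → F) (c : Fin l → F)
    (hY : nabJ d N B Y = fun p => if (p.2 : ℕ) + 1 < N p.1 then 0 else c p.1) :
    ∃ u : Fin l → F, jet d N u = Y ∧ ∀ j, d^[N j] (u j) = Matrix.mulVec B Y j + c j := by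
  let u : Fin l → F := fun j => if hj : 0 < N j then Y ⟨j, ⟨0, hj⟩⟩ else Matrix.mulVec B Y j + c j
  have key : ∀ j (n : ℕ) (hn : n < N j), d^[n] (u j) = Y ⟨j, ⟨n, hn⟩⟩ := by
    intro j n
    induction n with
    | zero => intro hn; simp [u, hn]
    | succ n ih =>
      intro hn
      rw [Function.iterate_succ_apply', ih (by omega)]
      have := congrFun hY ⟨j, ⟨n, by omega⟩⟩
      simp only [nabJ, dif_pos hn, if_pos hn] at this
      exact sub_eq_zero.1 this
  refine ⟨u, ?_, ?_⟩
  · ext ⟨j, n⟩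
    exact key j n n.2
  · intro j
    rcases Nat.eq_zero_or_pos (N j) with h0 | hpos
    · simp [h0, u]
    · obtain ⟨m, hm⟩ : ∃ m, N j = m + 1 := ⟨N j - 1, by omega⟩
      have := congrFun hY ⟨j, ⟨m, by omega⟩⟩
      simp only [nabJ, hm, lt_irrefl, dif_neg, if_neg, not_false_eq_true] at this
      rw [hm, Function.iterate_succ_apply', key j m (by omega)]
      linear_combination this

lemma top_solve (N : Fin l → ℕ) (Abar : Matrix (Fin l) (Fin l) F) (hinv : IsUnit Abar)
    (L : Matrix (Fin l) (Σ j : Fin l, Fin (N j)) F) (t c : Fin l → F)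
    (Y : (Σ j : Fin l, Fin (N j)) → F) :
    Matrix.mulVec Abar t + Matrix.mulVec L Y = c ↔
      t = Matrix.mulVec (-(Abar⁻¹ * L)) Y + Matrix.mulVec Abar⁻¹ c := by
  have hu := (Matrix.isUnit_iff_isUnit_det _).1 hinv
  constructor
  · rintro rfl
    rw [Matrix.mulVec_add, Matrix.mulVec_mulVec, Matrix.mulVec_mulVec, Matrix.nonsing_inv_mul _ hu,
      Matrix.neg_mulVec]
    simp
  · rintro rfl
    rw [Matrix.mulVec_add, Matrix.mulVec_mulVec, Matrix.mulVec_mulVec, Matrix.mul_nonsing_inv _ hu,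
      Matrix.mul_neg, ← Matrix.mul_assoc, Matrix.mul_nonsing_inv _ hu, Matrix.neg_mulVec]
    simp

/-- The jet as a linear map. -/
def jetL (hd : IsDerivation d) (C : Subfield F) (hC : ∀ x : F, x ∈ C ↔ d x = 0)
    (N : Fin l → ℕ) : (Fin l → F) →ₗ[C] ((Σ j : Fin l, Fin (N j)) → F) where
  toFun := jet d N
  map_add' x y := by ext p; simp [jet, it_add hd]
  map_smul' c x := by
    ext p
    exact it_mul hd _ _ _ ((hC _).1 c.2)

/-- The operator as a linear map. -/
def MopL (hd : IsDerivation d) (C : Subfield F) (hC : ∀ x : F, x ∈ C ↔ d x = 0)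
    (N : Fin l → ℕ) (a : Fin l → Fin l → ℕ → F) : (Fin l → F) →ₗ[C] (Fin l → F) where
  toFun := Mop d N a
  map_add' x y := by
    ext i; simp [Mop, it_add hd, mul_add, Finset.sum_add_distrib]
  map_smul' c x := by
    ext i
    have h1 : ∀ (n : ℕ) (y : F), d^[n] (c • y) = (c : F) * d^[n] y :=
      fun n y => it_mul hd _ _ _ ((hC _).1 c.2)
    have h2 : ∀ y : F, c • y = (c : F) * y := fun y => rfl
    simp only [Mop, Pi.smul_apply, h1, RingHom.id_apply]
    rw [h2]
    simp only [Finset.mul_sum]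
    refine Finset.sum_congr rfl fun j _ => Finset.sum_congr rfl fun n _ => ?_
    ring

lemma upper (hd : IsDerivation d)
    (C : Subfield F) (hC : ∀ x : F, x ∈ C ↔ d x = 0)
    (N h : Fin l → ℕ) (a : Fin l → Fin l → ℕ → F)
    (hmaj : ∀ i j (n : ℕ), (N j : ℤ) - (h i : ℤ) < (n : ℤ) → a i j n = 0)
    (Abar : Matrix (Fin l) (Fin l) F)
    (hAbar : ∀ i j, Abar i j = if h i ≤ N j then a i j (N j - h i) else 0)
    (hinv : IsUnit Abar) :
    ∑ i, h i ≤ ∑ j, N j ∧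
    Module.rank C (LinearMap.ker (MopL hd C hC N a)) ≤ ((∑ j, N j - ∑ i, h i : ℕ) : Cardinal) := by
  classical
  have hfr : ∑ i, h i + Module.finrank F (LinearMap.ker (GG d N h a).mulVecLin) = ∑ j, N j := by
    have h1 := LinearMap.finrank_range_add_finrank_ker (GG d N h a).mulVecLin
    have h2 := (GG_indep hd N h a hmaj Abar hAbar hinv).rank_matrix
    rw [Matrix.rank] at h2
    rw [h2] at h1
    simpa using h1
  refine ⟨by omega, ?_⟩
  apply rank_le
  intro s hs
  let b : s → (Fin l → F) := fun x => (x : LinearMap.ker (MopL hd C hC N a))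
  have hb : LinearIndependent C b := hs.map' (Submodule.subtype _) (Submodule.ker_subtype _)
  -- top coefficients
  let a' : Fin l → Fin l → ℕ → F := fun i j => (DD d)^[h i] (a i j)
  have ha' : (fun i j => a' i j (N j)) = Abar := by
    ext i j
    exact DD_lead hd (a i j) (N j) (h i) (hmaj i j) _ (hAbar i j) _ _ (by omega)
  have hM : ∀ u, Mop d N a u = 0 → Mop d N a' u = 0 := by
    intro u hu
    ext i
    have := it_Mop hd N h a hmaj u i (h i) le_rfl
    rw [hu] at this
    have hz : ∀ k : ℕ, d^[k] 0 = 0 := by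
      intro k
      simpa using it_sub hd k 0 0
    rw [Pi.zero_apply, hz] at this
    exact this.symm
  have htop : ∀ u, Mop d N a u = 0 → (fun j => d^[N j] (u j)) =
      Matrix.mulVec (-(Abar⁻¹ * LL N a')) (jet d N u) := by
    intro u hu
    have h1 := hM u hu
    rw [Mop_top, ha', top_solve N Abar hinv] at h1
    rw [h1]; simp
  have hbk : ∀ x, Mop d N a (b x) = 0 := fun x => LinearMap.mem_ker.1 (x : LinearMap.ker (MopL hd C hC N a)).2
  have hjet : LinearIndependent C (fun x => jet d N (b x)) := by
    have : LinearIndependent C (fun x => ((jetL hd C hC N).comp (Submodule.subtype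
        (LinearMap.ker (MopL hd C hC N a)))) (x : LinearMap.ker (MopL hd C hC N a)) : s → _) := by
      apply hs.map'
      rw [LinearMap.ker_eq_bot']
      rintro ⟨u, hu⟩ hu0
      have hu0' : jet d N u = 0 := hu0
      have hu' : Mop d N a u = 0 := LinearMap.mem_ker.1 hu
      have ht := htop u hu'
      rw [hu0', Matrix.mulVec_zero] at ht
      apply Subtype.ext
      ext j
      rcases Nat.eq_zero_or_pos (N j) with h0 | hpos
      · have := congrFun ht j
        simpa [h0] using this
      · exact congrFun hu0' ⟨j, ⟨0, hpos⟩⟩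
    exact this
  have hjF := horiz_indep hd C hC (nabJ_conn hd N (-(Abar⁻¹ * LL N a'))) _
    (fun x => nabJ_jet N _ (b x) (fun j => congrFun (htop _ (hbk x)) j)) hjet
  have hker : ∀ x, jet d N (b x) ∈ LinearMap.ker (GG d N h a).mulVecLin := by
    intro x
    rw [LinearMap.mem_ker, Matrix.mulVecLin_apply]
    ext q
    rw [GG_jet hd N h a hmaj, hbk x]
    simpa using it_sub hd q.2 0 0
  have hW : LinearIndependent F (fun x => (⟨jet d N (b x), hker x⟩ :
      LinearMap.ker (GG d N h a).mulVecLin)) :=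
    LinearIndependent.of_comp (Submodule.subtype _) hjF
  have := hW.fintype_card_le_finrank
  rw [Fintype.card_coe] at this
  omega

lemma closed_zero (hd : IsDerivation d) (hLC : LinearlyClosed d)
    (C : Subfield F) (hC : ∀ x : F, x ∈ C ↔ d x = 0)
    (N : Fin l → ℕ) (a : Fin l → Fin l → ℕ → F)
    (Abar : Matrix (Fin l) (Fin l) F)
    (hAbar : ∀ i j, Abar i j = a i j (N j))
    (hinv : IsUnit Abar) [Module.Finite C (LinearMap.ker (MopL hd C hC N a))] :
    (∀ b, ∃ u, Mop d N a u = b) ∧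
    ∑ j, N j ≤ Module.finrank C (LinearMap.ker (MopL hd C hC N a)) := by
  classical
  have hA : (fun i j => a i j (N j)) = Abar := by ext i j; rw [hAbar]
  set B := -(Abar⁻¹ * LL N a) with hB
  have hn := nabJ_conn hd N B
  have hspan := horiz_span hd hLC hn
  constructor
  · intro b
    obtain ⟨Y, -, hY⟩ := horiz_surj hd hLC hn
      (fun p => if (p.2 : ℕ) + 1 < N p.1 then 0 else (Matrix.mulVec Abar⁻¹ b) p.1)
      (by rw [hspan]; trivial)
    obtain ⟨u, hu, hu'⟩ := jet_recon N B Y _ hY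
    refine ⟨u, ?_⟩
    rw [Mop_top, hA, top_solve N Abar hinv, hu]
    ext j
    exact hu' j
  · obtain ⟨t, ht, hts, hli⟩ := exists_linearIndependent F {v | nabJ d N B v = 0}
    rw [hspan] at hts
    have hrec : ∀ x : t, ∃ u, jet d N u = x ∧ Mop d N a u = 0 := by
      intro x
      obtain ⟨u, hu, hu'⟩ := jet_recon N B x 0 (by
        have : nabJ d N B x = 0 := ht x.2
        rw [this]; ext p; simp)
      refine ⟨u, hu, ?_⟩
      rw [Mop_top, hA, top_solve N Abar hinv, hu]
      ext j
      simpa using hu' j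
    choose u hu hu0 using hrec
    let bas := Module.Basis.mk hli (by simp [hts])
    have : Fintype t := FiniteDimensional.fintypeBasisIndex bas
    have hcard : Fintype.card t = ∑ j, N j := by
      rw [← Module.finrank_eq_card_basis bas]; simp
    rw [← hcard]
    apply LinearIndependent.fintype_card_le_finrank
      (b := fun x => (⟨u x, LinearMap.mem_ker.2 (hu0 x)⟩ : LinearMap.ker (MopL hd C hC N a)))
    apply LinearIndependent.of_comp ((jetL hd C hC N).comp (Submodule.subtype _))
    have h2 : LinearIndependent C (fun x : t => (x : (Σ j : Fin l, Fin (N j)) → F)) :=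
      hli.restrict_scalars' C
    convert h2 using 1
    ext x : 1
    exact hu x

end jets

section final
variable {F : Type*} [Field F] {d : F → F} {l : ℕ}

lemma fin_of_le {K V : Type*} [Field K] [AddCommGroup V] [Module K V] {n : ℕ}
    (hr : Module.rank K V ≤ (n : Cardinal)) : Module.Finite K V ∧ Module.finrank K V ≤ n :=
  ⟨Module.rank_lt_aleph0_iff.1 (lt_of_le_of_lt hr (Cardinal.natCast_lt_aleph0)),
    Module.finrank_le_of_rank_le hr⟩

lemma closed (hd : IsDerivation d) (hLC : LinearlyClosed d)
    (C : Subfield F) (hC : ∀ x : F, x ∈ C ↔ d x = 0)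
    (N h : Fin l → ℕ) (a : Fin l → Fin l → ℕ → F)
    (hmaj : ∀ i j (n : ℕ), (N j : ℤ) - (h i : ℤ) < (n : ℤ) → a i j n = 0)
    (Abar : Matrix (Fin l) (Fin l) F)
    (hAbar : ∀ i j, Abar i j = if h i ≤ N j then a i j (N j - h i) else 0)
    (hinv : IsUnit Abar) :
    (∀ b, ∃ u, Mop d N a u = b) ∧
    Module.rank C (LinearMap.ker (MopL hd C hC N a)) = ((∑ j, N j - ∑ i, h i : ℕ) : Cardinal) := by
  classical
  obtain ⟨hle, hS⟩ := upper hd C hC N h a hmaj Abar hAbar hinv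
  obtain ⟨finS, hS'⟩ := fin_of_le hS
  let a' : Fin l → Fin l → ℕ → F := fun i j => (DD d)^[h i] (a i j)
  have ha' : ∀ i j, Abar i j = a' i j (N j) := by
    intro i j
    exact (DD_lead hd (a i j) (N j) (h i) (hmaj i j) _ (hAbar i j) _ _ (by omega)).symm
  have hM : ∀ u i, Mop d N a' u i = d^[h i] (Mop d N a u i) := by
    intro u i
    exact (it_Mop hd N h a hmaj u i (h i) le_rfl).symm
  obtain ⟨finT, hT⟩ := fin_of_le (upper hd C hC N 0 a' (by
    intro i j n hn
    exact DD_supp hd (a i j) _ (hmaj i j) (h i) n (by simp at hn; omega)) Abar (by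
    intro i j; simpa using ha' i j) hinv).2
  let e : Fin l → Fin l → ℕ → F := fun i j n => if i = j ∧ n = h j then 1 else 0
  have hE : ∀ u i, Mop d h e u i = d^[h i] (u i) := by
    intro u i
    simp only [Mop, e]
    rw [Finset.sum_eq_single i, Finset.sum_eq_single (h i)]
    · simp
    · intro n _ hn; simp [hn]
    · simp
    · intro j _ hj
      refine Finset.sum_eq_zero fun n _ => ?_
      simp [Ne.symm hj]
    · simp
  obtain ⟨finK, hK⟩ := fin_of_le (upper hd C hC h 0 e (by
    intro i j n hn
    simp only [e]
    rw [if_neg]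
    rintro ⟨-, rfl⟩
    simp at hn) 1 (by
    intro i j
    simp [e, Matrix.one_apply]) isUnit_one).2
  obtain ⟨hsurj, hT2⟩ := closed_zero hd hLC C hC N a' Abar ha' hinv
  let S := LinearMap.ker (MopL hd C hC N a)
  let T := LinearMap.ker (MopL hd C hC N a')
  let K := LinearMap.ker (MopL hd C hC h e)
  have memS : ∀ u, u ∈ S ↔ Mop d N a u = 0 := fun u => LinearMap.mem_ker
  have memT : ∀ u, u ∈ T ↔ Mop d N a' u = 0 := fun u => LinearMap.mem_ker
  have memK : ∀ u, u ∈ K ↔ Mop d h e u = 0 := fun u => LinearMap.mem_ker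
  let g : T →ₗ[C] (Fin l → F) := (MopL hd C hC N a).domRestrict T
  have hg : ∀ x : T, g x = Mop d N a x := fun x => rfl
  have hgK : LinearMap.range g ≤ K := by
    rintro _ ⟨x, rfl⟩
    rw [memK, hg]
    ext i
    rw [hE, ← hM, (memT _).1 x.2]
  have hkerS : Module.finrank C (LinearMap.ker g) ≤ Module.finrank C S := by
    let f : LinearMap.ker g →ₗ[C] S :=
      (T.subtype.comp (LinearMap.ker g).subtype).codRestrict S (by
        intro x
        rw [memS]
        exact LinearMap.mem_ker.1 x.2)
    apply LinearMap.finrank_le_finrank_of_injective (f := f)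
    intro x y hxy
    apply Subtype.ext
    apply Subtype.ext
    exact congrArg (fun s : S => (s : Fin l → F)) hxy
  have hrn := LinearMap.finrank_range_add_finrank_ker g
  have hrK : Module.finrank C (LinearMap.range g) ≤ Module.finrank C K :=
    Submodule.finrank_mono hgK
  have hT2' : ∑ j, N j ≤ Module.finrank C T := hT2
  have hK' : Module.finrank C K ≤ ∑ j, h j := by simpa using hK
  have hS'' : Module.finrank C S ≤ ∑ j, N j - ∑ i, h i := hS'
  have hrange : LinearMap.range g = K := Submodule.eq_of_le_of_finrank_le hgK (by omega)
  constructor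
  · intro b
    obtain ⟨u, hu⟩ := hsurj (fun i => d^[h i] (b i))
    have hmem : b - Mop d N a u ∈ K := by
      rw [memK]
      ext i
      rw [hE, Pi.sub_apply, it_sub hd, ← hM, hu]
      simp
    rw [← hrange] at hmem
    obtain ⟨x, hx⟩ := hmem
    refine ⟨x + u, ?_⟩
    have h3 : Mop d N a (x + u) = Mop d N a x + Mop d N a u :=
      (MopL hd C hC N a).map_add x u
    rw [h3, ← hg, hx, sub_add_cancel]
  · have : Module.finrank C S = ∑ j, N j - ∑ i, h i := by omega
    rw [← Module.finrank_eq_rank]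
    exact congrArg _ this

end final

end LinSys

/-- Let `M(∂)` be an `ℓ×ℓ` matrix differential operator, `(Mu)_i = Σ_j Σ_n a_{ij,n} ∂^n u_j`,
with a majorant `{N_j; h_i}` (i.e. `a_{ij,n} = 0` whenever `n > N_j − h_i`) whose
leading matrix `Ā` (with `ā_{ij} = a_{ij, N_j − h_i}`, or `0` if `N_j − h_i < 0`) is
invertible.  Then the solutions of `Mu = 0` form a `C`-subspace of `F^ℓ` of dimension at
most `d = Σ_j (N_j − h_j)`; and if `F` is linearly closed, `M` is surjective and the
dimension equals `d`. -/
theorem stmt_3 (F : Type*) [Field F] [CharZero F] (d : F → F) (hd : IsDerivation d)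
    (C : Subfield F) (hC : ∀ x : F, x ∈ C ↔ d x = 0)
    (l : ℕ) (N h : Fin l → ℕ) (a : Fin l → Fin l → ℕ → F)
    (hmaj : ∀ i j (n : ℕ), (N j : ℤ) - (h i : ℤ) < (n : ℤ) → a i j n = 0)
    (Abar : Matrix (Fin l) (Fin l) F)
    (hAbar : ∀ i j, Abar i j = if h i ≤ N j then a i j (N j - h i) else 0)
    (hinv : IsUnit Abar)
    (S : Submodule C (Fin l → F))
    (hS : ∀ u : Fin l → F, u ∈ S ↔
      ∀ i, ∑ j, ∑ n ∈ Finset.range (N j + 1), a i j n * d^[n] (u j) = 0) :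
    Module.rank C S ≤ ((∑ j, ((N j : ℤ) - (h j : ℤ))).toNat : Cardinal) ∧
    (LinearlyClosed d →
      (∀ b : Fin l → F, ∃ u : Fin l → F,
        ∀ i, ∑ j, ∑ n ∈ Finset.range (N j + 1), a i j n * d^[n] (u j) = b i) ∧
      Module.rank C S = ((∑ j, ((N j : ℤ) - (h j : ℤ))).toNat : Cardinal)) := by
  have hSk : S = LinearMap.ker (LinSys.MopL hd C hC N a) := by
    ext u
    rw [hS, LinearMap.mem_ker]
    exact (funext_iff (f := LinSys.Mop d N a u) (g := 0)).symm
  subst hSk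
  obtain ⟨hle, hr⟩ := LinSys.upper hd C hC N h a hmaj Abar hAbar hinv
  have hdeg : (∑ j, ((N j : ℤ) - (h j : ℤ))).toNat = ∑ j, N j - ∑ i, h i := by
    rw [Finset.sum_sub_distrib, ← Nat.cast_sum, ← Nat.cast_sum]
    omega
  rw [hdeg]
  refine ⟨hr, fun hLC => ?_⟩
  obtain ⟨h1, h2⟩ := LinSys.closed hd hLC C hC N h a hmaj Abar hAbar hinv
  refine ⟨fun b => ?_, h2⟩
  obtain ⟨u, hu⟩ := h1 b
  exact ⟨u, fun i => congrFun hu i⟩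
end

section
/- Let F be a linearly closed differential field of characteristic zero with derivation ∂ and constants C = {c ∈ F : ∂c = 0}, and let M : F^ℓ → F^ℓ be an ℓ×ℓ matrix differential operator over F. Then the following are equivalent: (i) the kernel {u ∈ F^ℓ : Mu = 0} is finite-dimensional over C; (ii) the image M(F^ℓ) has finite codimension over C in F^ℓ; (iii) M : F^ℓ → F^ℓ is surjective. -/
/-- The `ℓ×ℓ` matrix differential operator with coefficients `a i j n` (nonzero only for
`n ≤ N`): `(Mu)_i = Σ_j Σ_{n=0}^N a_{ij,n} d^n (u j)`. -/
noncomputable def matDiffOp {F : Type*} [Field F] (d : F → F) {l : ℕ} (N : ℕ)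
    (a : Fin l → Fin l → ℕ → F) (u : Fin l → F) : Fin l → F :=
  fun i => ∑ j, ∑ n ∈ Finset.range (N + 1), a i j n * d^[n] (u j)

/-- Either surjective with finite-dimensional kernel, or with infinite-dimensional
kernel and cokernel. -/
def GoodMap {C V W : Type*} [Field C] [AddCommGroup V] [Module C V] [AddCommGroup W] [Module C W]
    (f : V →ₗ[C] W) : Prop :=
  (Function.Surjective f ∧ (LinearMap.ker f).FG) ∨
    (¬ (LinearMap.ker f).FG ∧ ¬ Module.Finite C (W ⧸ LinearMap.range f))

section good
variable {C V W V' W' : Type*} [Field C] [AddCommGroup V] [Module C V] [AddCommGroup W]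
  [Module C W] [AddCommGroup V'] [Module C V'] [AddCommGroup W'] [Module C W']

theorem GoodMap.conj {f : V →ₗ[C] W} (h : GoodMap f) (e : V' ≃ₗ[C] V) (e' : W ≃ₗ[C] W')
    (g : V' →ₗ[C] W') (hg : ∀ x, g x = e' (f (e x))) : GoodMap g := by
  have hg' : g = (e'.toLinearMap ∘ₗ f) ∘ₗ e.toLinearMap := by ext x; simp [hg]
  have hk : LinearMap.ker f = (LinearMap.ker g).map e.toLinearMap := by
    ext x
    simp only [LinearMap.mem_ker, Submodule.mem_map]
    constructor
    · intro hx
      exact ⟨e.symm x, by simp [hg, hx], by simp⟩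
    · rintro ⟨y, hy, rfl⟩
      rw [hg] at hy
      simpa using hy
  have hk' : LinearMap.ker g = (LinearMap.ker f).map e.symm.toLinearMap := by
    rw [hk, ← Submodule.map_comp]; simp
  have hr : (LinearMap.range g).map e'.symm.toLinearMap = LinearMap.range f := by
    ext x
    simp only [Submodule.mem_map, LinearMap.mem_range]
    constructor
    · rintro ⟨_, ⟨y, rfl⟩, rfl⟩
      exact ⟨e y, by simp [hg]⟩
    · rintro ⟨y, rfl⟩
      exact ⟨_, ⟨e.symm y, rfl⟩, by simp [hg]⟩
  rcases h with ⟨h1, h2⟩ | ⟨h1, h2⟩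
  · left
    refine ⟨?_, hk' ▸ h2.map _⟩
    have : (g : V' → W') = e' ∘ f ∘ e := by ext x; simp [hg]
    rw [this]
    exact e'.surjective.comp (h1.comp e.surjective)
  · right
    refine ⟨fun h => h1 (hk ▸ h.map _), fun h => h2 ?_⟩
    exact Module.Finite.equiv (Submodule.Quotient.equiv _ _ e'.symm hr)

theorem GoodMap.prod {f : V →ₗ[C] W} {g : V' →ₗ[C] W'} (hf : GoodMap f) (hg : GoodMap g) :
    GoodMap (f.prodMap g) := by
  have k1 : (LinearMap.ker (f.prodMap g)).map (LinearMap.fst C V V') = LinearMap.ker f := by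
    ext x
    simp only [Submodule.mem_map, LinearMap.mem_ker]
    constructor
    · rintro ⟨⟨a, b⟩, h, rfl⟩
      simpa using congrArg Prod.fst h
    · intro h; exact ⟨(x, 0), by simp [h], rfl⟩
  have k2 : (LinearMap.ker (f.prodMap g)).map (LinearMap.snd C V V') = LinearMap.ker g := by
    ext x
    simp only [Submodule.mem_map, LinearMap.mem_ker]
    constructor
    · rintro ⟨⟨a, b⟩, h, rfl⟩
      simpa using congrArg Prod.snd h
    · intro h; exact ⟨(0, x), by simp [h], rfl⟩
  have c1 : LinearMap.range (f.prodMap g) ≤ (LinearMap.range f).comap (LinearMap.fst C W W') := by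
    rintro _ ⟨⟨a, b⟩, rfl⟩
    exact ⟨a, rfl⟩
  have c2 : LinearMap.range (f.prodMap g) ≤ (LinearMap.range g).comap (LinearMap.snd C W W') := by
    rintro _ ⟨⟨a, b⟩, rfl⟩
    exact ⟨b, rfl⟩
  have q1 : Module.Finite C ((W × W') ⧸ LinearMap.range (f.prodMap g)) →
      Module.Finite C (W ⧸ LinearMap.range f) := by
    intro h
    refine Module.Finite.of_surjective (Submodule.mapQ _ _ _ c1) ?_
    intro y
    obtain ⟨y, rfl⟩ := Submodule.Quotient.mk_surjective _ y
    exact ⟨Submodule.Quotient.mk (y, 0), by simp⟩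
  have q2 : Module.Finite C ((W × W') ⧸ LinearMap.range (f.prodMap g)) →
      Module.Finite C (W' ⧸ LinearMap.range g) := by
    intro h
    refine Module.Finite.of_surjective (Submodule.mapQ _ _ _ c2) ?_
    intro y
    obtain ⟨y, rfl⟩ := Submodule.Quotient.mk_surjective _ y
    exact ⟨Submodule.Quotient.mk (0, y), by simp⟩
  rcases hf with ⟨h1, h2⟩ | ⟨h1, h2⟩
  · rcases hg with ⟨h3, h4⟩ | ⟨h3, h4⟩
    · left
      refine ⟨?_, ?_⟩
      · rintro ⟨a, b⟩
        obtain ⟨x, rfl⟩ := h1 a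
        obtain ⟨y, rfl⟩ := h3 b
        exact ⟨(x, y), rfl⟩
      · rw [LinearMap.ker_prodMap]
        exact h2.prod h4
    · right
      exact ⟨fun h => h3 (k2 ▸ h.map _), fun h => h4 (q2 h)⟩
  · right
    exact ⟨fun h => h1 (k1 ▸ h.map _), fun h => h2 (q1 h)⟩

end good

section act
variable {R C F : Type*} [Ring R] [Field C] [AddCommGroup F] [Module R F] [Module C F]
  [SMulCommClass R C F]

/-- Action of a matrix over `R` on vectors over an `R`-module. -/
def actMat (C : Type*) {R F : Type*} [Ring R] [Field C] [AddCommGroup F] [Module R F] [Module C F]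
    [SMulCommClass R C F] {l : ℕ} (M : Matrix (Fin l) (Fin l) R) :
    (Fin l → F) →ₗ[C] (Fin l → F) where
  toFun u i := ∑ j, M i j • u j
  map_add' u v := by ext i; simp [smul_add, Finset.sum_add_distrib]
  map_smul' c u := by
    ext i
    simp only [Pi.smul_apply, RingHom.id_apply, Finset.smul_sum]
    exact Finset.sum_congr rfl fun j _ => smul_comm _ _ _

theorem actMat_apply {l : ℕ} (M : Matrix (Fin l) (Fin l) R) (u : Fin l → F) (i : Fin l) :
    actMat C M u i = ∑ j, M i j • u j := rfl

theorem actMat_mul {l : ℕ} (A B : Matrix (Fin l) (Fin l) R) (u : Fin l → F) :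
    actMat C (A * B) u = actMat C A (actMat C B u) := by
  ext i
  simp only [actMat_apply, Matrix.mul_apply, Finset.sum_smul, Finset.smul_sum, mul_smul]
  exact Finset.sum_comm

theorem actMat_one {l : ℕ} (u : Fin l → F) :
    actMat C (1 : Matrix (Fin l) (Fin l) R) u = u := by
  ext i
  simp [actMat_apply, Matrix.one_apply]

/-- invertible matrices act by linear equivalences -/
def actEquiv {l : ℕ} (A B : Matrix (Fin l) (Fin l) R) (h : A * B = 1) (h' : B * A = 1) :
    (Fin l → F) ≃ₗ[C] (Fin l → F) :=
  LinearEquiv.ofLinearMap (actMat C A) (actMat C B)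
    (LinearMap.ext fun u => by simp [← actMat_mul, h, actMat_one])
    (LinearMap.ext fun u => by simp [← actMat_mul, h', actMat_one])

theorem nil1 {l : ℕ} {X : Matrix (Fin l) (Fin l) R} (h : X * X = 0) : (1 + X) * (1 - X) = 1 := by
  simp [add_mul, mul_sub, h]

theorem nil2 {l : ℕ} {X : Matrix (Fin l) (Fin l) R} (h : X * X = 0) : (1 - X) * (1 + X) = 1 := by
  simp [sub_mul, mul_add, h]

theorem good_left {l : ℕ} (X M : Matrix (Fin l) (Fin l) R) (h : X * X = 0)
    (hg : GoodMap (actMat C ((1 + X) * M) : (Fin l → F) →ₗ[C] (Fin l → F))) :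
    GoodMap (actMat C M : (Fin l → F) →ₗ[C] (Fin l → F)) := by
  refine hg.conj (LinearEquiv.refl _ _) (actEquiv (1 - X) (1 + X) (nil2 h) (nil1 h)) _ ?_
  intro x
  change _ = actMat C (1 - X) (actMat C ((1 + X) * M) x)
  rw [← actMat_mul, ← mul_assoc, nil2 h, one_mul]

theorem good_right {l : ℕ} (X M : Matrix (Fin l) (Fin l) R) (h : X * X = 0)
    (hg : GoodMap (actMat C (M * (1 + X)) : (Fin l → F) →ₗ[C] (Fin l → F))) :
    GoodMap (actMat C M : (Fin l → F) →ₗ[C] (Fin l → F)) := by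
  refine hg.conj (actEquiv (1 - X) (1 + X) (nil2 h) (nil1 h)) (LinearEquiv.refl _ _) _ ?_
  intro x
  change _ = actMat C (M * (1 + X)) (actMat C (1 - X) x)
  rw [← actMat_mul, mul_assoc, nil1 h, mul_one]

theorem good_perm {l : ℕ} (σ τ : Equiv.Perm (Fin l)) (M : Matrix (Fin l) (Fin l) R)
    (hg : GoodMap (actMat C (M.submatrix σ τ) : (Fin l → F) →ₗ[C] (Fin l → F))) :
    GoodMap (actMat C M : (Fin l → F) →ₗ[C] (Fin l → F)) := by
  refine hg.conj (LinearEquiv.funCongrLeft C F τ) (LinearEquiv.funCongrLeft C F σ.symm) _ ?_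
  intro x
  ext i
  simp only [LinearEquiv.funCongrLeft_apply, LinearMap.funLeft_apply, actMat_apply,
    Matrix.submatrix_apply, Equiv.apply_symm_apply]
  exact (Equiv.sum_comp τ fun j => M i j • x j).symm

/-- scalar action -/
def actS (C : Type*) {R : Type*} (F : Type*) [Ring R] [Field C] [AddCommGroup F] [Module R F]
    [Module C F] [SMulCommClass R C F] (r : R) : F →ₗ[C] F where
  toFun u := r • u
  map_add' u v := smul_add _ _ _
  map_smul' c u := smul_comm _ _ _

theorem good_block {l : ℕ} (M : Matrix (Fin (l+1)) (Fin (l+1)) R)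
    (h1 : ∀ i : Fin l, M i.succ 0 = 0) (h2 : ∀ j : Fin l, M 0 j.succ = 0)
    (hp : GoodMap (actS C F (M 0 0)))
    (hg : GoodMap (actMat C (M.submatrix Fin.succ Fin.succ) : (Fin l → F) →ₗ[C] (Fin l → F))) :
    GoodMap (actMat C M : (Fin (l+1) → F) →ₗ[C] (Fin (l+1) → F)) := by
  refine (hp.prod hg).conj (Fin.consLinearEquiv C (fun _ => F)).symm
    (Fin.consLinearEquiv C (fun _ => F)) _ ?_
  intro x
  ext i
  refine Fin.cases ?_ (fun i => ?_) i
  · simp [actMat_apply, Fin.sum_univ_succ, h2, actS]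
  · simp [actMat_apply, Fin.sum_univ_succ, h1, Fin.tail]

theorem good_all (deg : R → ℕ)
    (hl : ∀ a b : R, b ≠ 0 → ∃ q, deg (a - q * b) < deg b)
    (hr : ∀ a b : R, b ≠ 0 → ∃ q, deg (a - b * q) < deg b)
    (hs : ∀ r : R, r ≠ 0 → GoodMap (actS C F r)) (hF : ¬ Module.Finite C F) :
    ∀ (l : ℕ) (M : Matrix (Fin l) (Fin l) R),
      GoodMap (actMat C M : (Fin l → F) →ₗ[C] (Fin l → F)) := by
  intro l
  induction l with
  | zero =>
    intro M
    left
    refine ⟨fun y => ⟨0, Subsingleton.elim _ _⟩, ?_⟩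
    rw [Subsingleton.elim (LinearMap.ker _) ⊥]
    exact Submodule.fg_bot
  | succ l ih =>
    have key : ∀ (n : ℕ) (M : Matrix (Fin (l+1)) (Fin (l+1)) R), M 0 0 ≠ 0 → deg (M 0 0) = n →
        GoodMap (actMat C M : (Fin (l+1) → F) →ₗ[C] (Fin (l+1) → F)) := by
      intro n
      induction n using Nat.strong_induction_on with
      | _ n IH =>
      intro M h0 hn
      by_cases hA : ∃ i : Fin l, ∀ q, M i.succ 0 - q * M 0 0 ≠ 0
      · obtain ⟨i, hi⟩ := hA
        obtain ⟨q, hq⟩ := hl (M i.succ 0) (M 0 0) h0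
        refine good_left (Matrix.single i.succ 0 (-q)) M ?_ ?_
        · apply Matrix.single_mul_single_of_ne
          exact (Fin.succ_ne_zero i).symm
        · refine good_perm (Equiv.swap 0 i.succ) 1 _ ?_
          have e : (((1 + Matrix.single i.succ 0 (-q)) * M).submatrix
              (Equiv.swap 0 i.succ) (1 : Equiv.Perm (Fin (l+1)))) 0 0 = M i.succ 0 - q * M 0 0 := by
            simp [add_mul, sub_eq_add_neg]
          exact IH _ (hn ▸ hq) _ (by rw [e]; exact hi q) (by rw [e])
      by_cases hB : ∃ i : Fin l, ∀ q, M 0 i.succ - M 0 0 * q ≠ 0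
      · obtain ⟨i, hi⟩ := hB
        obtain ⟨q, hq⟩ := hr (M 0 i.succ) (M 0 0) h0
        refine good_right (Matrix.single 0 i.succ (-q)) M ?_ ?_
        · apply Matrix.single_mul_single_of_ne
          exact (Fin.succ_ne_zero i)
        · refine good_perm 1 (Equiv.swap 0 i.succ) _ ?_
          have e : ((M * (1 + Matrix.single 0 i.succ (-q))).submatrix
              (1 : Equiv.Perm (Fin (l+1))) (Equiv.swap 0 i.succ)) 0 0 = M 0 i.succ - M 0 0 * q := by
            simp [mul_add, sub_eq_add_neg]
          exact IH _ (hn ▸ hq) _ (by rw [e]; exact hi q) (by rw [e])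
      push Not at hA hB
      choose q hq using hA
      choose p hp using hB
      let X : Matrix (Fin (l+1)) (Fin (l+1)) R :=
        Matrix.of fun i k => if k = 0 then (Fin.cases 0 (fun i => - q i) i : R) else 0
      let Y : Matrix (Fin (l+1)) (Fin (l+1)) R :=
        Matrix.of fun k i => if k = 0 then (Fin.cases 0 (fun i => - p i) i : R) else 0
      have hX : X * X = 0 := by
        ext i j
        simp [Matrix.mul_apply, X, Fin.sum_univ_succ]
      have hY : Y * Y = 0 := by
        ext i j
        simp [Matrix.mul_apply, Y, Fin.sum_univ_succ]
      refine good_left X M hX (good_right Y _ hY ?_)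
      have a0 : ∀ j, ((1 + X) * M) 0 j = M 0 j := by
        intro j
        rw [add_mul, one_mul, Matrix.add_apply, Matrix.mul_apply]
        simp [X]
      have a1 : ∀ i : Fin l, ((1 + X) * M) i.succ 0 = 0 := by
        intro i
        rw [← hq i]
        rw [add_mul, one_mul, Matrix.add_apply, Matrix.mul_apply]
        simp [X, sub_eq_add_neg]

      have b0 : ∀ i, ((1 + X) * M * (1 + Y)) i 0 = ((1 + X) * M) i 0 := by
        intro i
        generalize (1 + X) * M = N
        rw [mul_add, mul_one, Matrix.add_apply, Matrix.mul_apply]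
        simp [Y]
      have b1 : ∀ i : Fin l, ((1 + X) * M * (1 + Y)) 0 i.succ = 0 := by
        intro i
        rw [← hp i, ← a0, ← a0]
        generalize (1 + X) * M = N
        rw [mul_add, mul_one, Matrix.add_apply, Matrix.mul_apply]
        simp [Y, sub_eq_add_neg]

      refine good_block _ (fun i => by rw [b0, a1]) b1 ?_ (ih _)
      rw [b0, a0]
      exact hs _ h0
    intro M
    by_cases hM : ∃ i j, M i j ≠ 0
    · obtain ⟨i, j, h⟩ := hM
      exact good_perm (Equiv.swap 0 i) (Equiv.swap 0 j) M (key _ _ (by simpa using h) rfl)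
    · push Not at hM
      have h0 : (actMat C M : (Fin (l+1) → F) →ₗ[C] (Fin (l+1) → F)) = 0 := by
        refine LinearMap.ext fun u => ?_
        ext i
        simp [actMat_apply, hM]
      have hV : ¬ Module.Finite C (Fin (l+1) → F) := fun h =>
        hF (Module.Finite.of_surjective (LinearMap.proj (R := C) (φ := fun _ : Fin (l+1) => F) 0)
          (fun y => ⟨fun _ => y, rfl⟩))
      right
      rw [h0]
      refine ⟨fun h => hV ?_, fun h => hV ?_⟩
      · rw [LinearMap.ker_zero] at h
        exact ⟨h⟩
      · rw [LinearMap.range_zero] at h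
        exact Module.Finite.equiv (Submodule.quotEquivOfEqBot _ rfl)

end act

section ops
variable {F : Type*} [Field F] {C : Subfield F}

/-- `P` is a differential operator of order `< n`. -/
def IsOp (D : Module.End C F) : ℕ → Module.End C F → Prop
  | 0, P => P = 0
  | n+1, P => ∃ (a : F) (P' : Module.End C F), IsOp D n P' ∧ P = LinearMap.mulLeft C a * D ^ n + P'

variable {D : Module.End C F}

theorem isOp_mono1 {n : ℕ} {P : Module.End C F} (h : IsOp D n P) : IsOp D (n+1) P :=
  ⟨0, P, h, by simp⟩

theorem isOp_mono {n m : ℕ} (hnm : n ≤ m) {P : Module.End C F} (h : IsOp D n P) : IsOp D m P := by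
  induction hnm with
  | refl => exact h
  | step _ ih => exact isOp_mono1 ih

theorem isOp_zero (n : ℕ) : IsOp D n 0 := isOp_mono (Nat.zero_le n) rfl

theorem ml_add (a b : F) : LinearMap.mulLeft C (a + b) = LinearMap.mulLeft C a + LinearMap.mulLeft C b := by
  ext x; simp [add_mul]

theorem ml_mul (a b : F) : LinearMap.mulLeft C (a * b) = LinearMap.mulLeft C a * LinearMap.mulLeft C b := by
  ext x; simp [mul_assoc]

theorem ml_neg (a : F) : LinearMap.mulLeft C (-a) = - LinearMap.mulLeft C a := by
  ext x; simp

theorem ml_inv {a : F} (h : a ≠ 0) : LinearMap.mulLeft C a * LinearMap.mulLeft C a⁻¹ = 1 := by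
  ext x; simp [h]

theorem isOp_add {n : ℕ} : ∀ {P Q : Module.End C F}, IsOp D n P → IsOp D n Q → IsOp D n (P + Q) := by
  induction n with
  | zero => rintro P Q rfl rfl; exact add_zero _
  | succ n ih =>
    rintro P Q ⟨a, P', hP, rfl⟩ ⟨b, Q', hQ, rfl⟩
    exact ⟨a + b, P' + Q', ih hP hQ, by rw [ml_add]; noncomm_ring⟩

theorem isOp_ml {n : ℕ} (c : F) : ∀ {P : Module.End C F}, IsOp D n P → IsOp D n (LinearMap.mulLeft C c * P) := by
  induction n with
  | zero => rintro P rfl; exact mul_zero _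
  | succ n ih =>
    rintro P ⟨a, P', hP, rfl⟩
    exact ⟨c * a, _, ih hP, by rw [ml_mul]; noncomm_ring⟩

theorem isOp_neg {n : ℕ} {P : Module.End C F} (h : IsOp D n P) : IsOp D n (-P) := by
  have := isOp_ml (-1) h
  have e : LinearMap.mulLeft C (-1 : F) * P = -P := by ext x; simp
  rwa [e] at this

theorem isOp_sub {n : ℕ} {P Q : Module.End C F} (h : IsOp D n P) (h' : IsOp D n Q) :
    IsOp D n (P - Q) := by
  rw [sub_eq_add_neg]; exact isOp_add h (isOp_neg h')

theorem isOp_pow (n : ℕ) (a : F) : IsOp D (n+1) (LinearMap.mulLeft C a * D ^ n) :=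
  ⟨a, 0, isOp_zero n, by simp⟩

variable (hD : ∀ a b : F, D (a * b) = D a * b + a * D b)
include hD

theorem D_ml (a : F) : D * LinearMap.mulLeft C a = LinearMap.mulLeft C a * D + LinearMap.mulLeft C (D a) := by
  ext x; simp [hD, add_comm]

theorem isOp_D {n : ℕ} : ∀ {P : Module.End C F}, IsOp D n P → IsOp D (n+1) (D * P) := by
  induction n with
  | zero => rintro P rfl; rw [mul_zero]; exact isOp_zero _
  | succ n ih =>
    rintro P ⟨a, P', hP, rfl⟩
    refine ⟨a, _, isOp_add (isOp_pow n (D a)) (ih hP), ?_⟩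
    rw [mul_add, ← mul_assoc, D_ml hD, pow_succ']
    noncomm_ring

theorem isOp_Dpow {n : ℕ} (m : ℕ) {P : Module.End C F} (h : IsOp D n P) :
    IsOp D (m + n) (D ^ m * P) := by
  induction m with
  | zero => simpa using h
  | succ m ih =>
    have := isOp_D hD ih
    rw [← mul_assoc, ← pow_succ'] at this
    exact isOp_mono (by omega) this

theorem isOp_mul {m n : ℕ} : ∀ {P Q : Module.End C F}, IsOp D m P → IsOp D n Q →
    IsOp D (m + n) (P * Q) := by
  induction m with
  | zero => rintro P Q rfl hQ; rw [zero_mul]; exact isOp_zero _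
  | succ m ih =>
    rintro P Q ⟨a, P', hP, rfl⟩ hQ
    rw [add_mul, mul_assoc]
    refine isOp_add (isOp_mono (by omega) (isOp_ml a (isOp_Dpow hD m hQ)))
      (isOp_mono (by omega) (ih hP hQ))

theorem isOp_comm (k : ℕ) (u : F) : ∃ R, IsOp D k R ∧
    D ^ k * LinearMap.mulLeft C u = LinearMap.mulLeft C u * D ^ k + R := by
  induction k with
  | zero => exact ⟨0, rfl, by simp⟩
  | succ k ih =>
    obtain ⟨R, hR, e⟩ := ih
    refine ⟨_, isOp_add (isOp_pow k (D u)) (isOp_D hD hR), ?_⟩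
    rw [pow_succ', mul_assoc, e, mul_add, ← mul_assoc, D_ml hD]
    noncomm_ring

theorem isOp_mlr {n : ℕ} (u : F) : ∀ {P : Module.End C F}, IsOp D n P →
    IsOp D n (P * LinearMap.mulLeft C u) := by
  induction n with
  | zero => rintro P rfl; exact zero_mul _
  | succ n ih =>
    rintro P ⟨a, P', hP, rfl⟩
    obtain ⟨R, hR, e⟩ := isOp_comm hD n u
    rw [add_mul, mul_assoc, e, mul_add, ← mul_assoc, ← ml_mul]
    exact isOp_add (isOp_add (isOp_pow _ _) (isOp_mono1 (isOp_ml a hR))) (isOp_mono1 (ih hP))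

theorem div_left {n : ℕ} {a : F} (ha : a ≠ 0) {P' : Module.End C F} (hP : IsOp D n P') (m : ℕ) :
    ∀ A, IsOp D m A → ∃ Q, (∃ k, IsOp D k Q) ∧
      IsOp D n (A - Q * (LinearMap.mulLeft C a * D ^ n + P')) := by
  induction m with
  | zero => rintro A rfl; exact ⟨0, ⟨0, rfl⟩, by simpa using isOp_zero n⟩
  | succ m ih =>
    intro A hA
    rcases lt_or_ge m n with h | h
    · exact ⟨0, ⟨0, rfl⟩, by simpa using isOp_mono h hA⟩
    obtain ⟨b, A', hA', rfl⟩ := hA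
    obtain ⟨k, rfl⟩ := Nat.exists_eq_add_of_le h
    set Q0 := LinearMap.mulLeft C b * D ^ k * LinearMap.mulLeft C a⁻¹ with hQ0
    have o0 : IsOp D (k+1) Q0 := isOp_mlr hD _ (isOp_pow k b)
    have e1 : LinearMap.mulLeft C a⁻¹ * LinearMap.mulLeft C a = 1 := by
      simpa using ml_inv (C := C) (inv_ne_zero ha)
    have e : LinearMap.mulLeft C b * D ^ (n + k) + A' - Q0 * (LinearMap.mulLeft C a * D ^ n + P')
        = A' - LinearMap.mulLeft C b * (D ^ k * (LinearMap.mulLeft C a⁻¹ * P')) := by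
      have : Q0 * (LinearMap.mulLeft C a * D ^ n) = LinearMap.mulLeft C b * D ^ (n + k) := by
        rw [hQ0, mul_assoc, ← mul_assoc (LinearMap.mulLeft C a⁻¹), e1, one_mul, mul_assoc,
          ← pow_add, add_comm]
      rw [mul_add, this, hQ0]
      simp only [mul_assoc]
      abel
    have o1 : IsOp D (n + k) (A' - LinearMap.mulLeft C b * (D ^ k * (LinearMap.mulLeft C a⁻¹ * P'))) :=
      isOp_sub hA' (isOp_mono (by omega) (isOp_ml b (isOp_Dpow hD k (isOp_ml _ hP))))
    obtain ⟨Q1, ⟨k1, o2⟩, o3⟩ := ih _ o1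
    refine ⟨Q0 + Q1, ⟨k + 1 + k1, isOp_add (isOp_mono (by omega) o0) (isOp_mono (by omega) o2)⟩, ?_⟩
    rwa [add_mul, ← sub_sub, e]

theorem div_right {n : ℕ} {a : F} (ha : a ≠ 0) {P' : Module.End C F} (hP : IsOp D n P') (m : ℕ) :
    ∀ A, IsOp D m A → ∃ Q, (∃ k, IsOp D k Q) ∧
      IsOp D n (A - (LinearMap.mulLeft C a * D ^ n + P') * Q) := by
  induction m with
  | zero => rintro A rfl; exact ⟨0, ⟨0, rfl⟩, by simpa using isOp_zero n⟩
  | succ m ih =>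
    intro A hA
    rcases lt_or_ge m n with h | h
    · exact ⟨0, ⟨0, rfl⟩, by simpa using isOp_mono h hA⟩
    obtain ⟨b, A', hA', rfl⟩ := hA
    obtain ⟨k, rfl⟩ := Nat.exists_eq_add_of_le h
    set Q0 := LinearMap.mulLeft C (a⁻¹ * b) * D ^ k with hQ0
    have o0 : IsOp D (k+1) Q0 := isOp_pow k _
    obtain ⟨R, hR, eR⟩ := isOp_comm hD n (a⁻¹ * b)
    have e : LinearMap.mulLeft C b * D ^ (n + k) + A' - (LinearMap.mulLeft C a * D ^ n + P') * Q0
        = A' - (LinearMap.mulLeft C a * R + P' * LinearMap.mulLeft C (a⁻¹ * b)) * D ^ k := by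
      have : (LinearMap.mulLeft C a * D ^ n) * Q0 = LinearMap.mulLeft C b * D ^ (n + k)
          + LinearMap.mulLeft C a * R * D ^ k := by
        rw [hQ0, mul_assoc, ← mul_assoc (D ^ n), eR, add_mul, mul_add, ← mul_assoc, ← mul_assoc,
          ← ml_mul, mul_inv_cancel_left₀ ha, mul_assoc, ← pow_add, mul_assoc]
      rw [add_mul, this, hQ0, add_mul, mul_assoc P']
      abel
    have oD : ∀ T : Module.End C F, IsOp D n T → IsOp D (n + k) (T * D ^ k) := by
      intro T hT
      clear * - hT
      induction n generalizing T with
      | zero => rw [show T = 0 from hT, zero_mul]; exact isOp_zero _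
      | succ n ih =>
        obtain ⟨c, T', hT', rfl⟩ := hT
        rw [add_mul, mul_assoc, ← pow_add]
        exact isOp_add (isOp_mono (by omega) (isOp_pow (n + k) c))
          (isOp_mono (by omega) (ih _ hT'))
    have o1 := isOp_sub hA' (oD _ (isOp_add (isOp_ml a hR) (isOp_mlr hD (a⁻¹ * b) hP)))
    rw [← e] at o1
    obtain ⟨Q1, ⟨k1, o2⟩, o3⟩ := ih _ o1
    refine ⟨Q0 + Q1, ⟨k + 1 + k1, isOp_add (isOp_mono (by omega) o0) (isOp_mono (by omega) o2)⟩, ?_⟩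
    rwa [mul_add, ← sub_sub]

theorem D_one : D 1 = 0 := by
  have := hD 1 1
  simpa using this

theorem factor {n : ℕ} : ∀ {P : Module.End C F}, IsOp D (n+1) P → P 1 = 0 →
    ∃ Q, IsOp D n Q ∧ P = Q * D := by
  induction n with
  | zero =>
    rintro P ⟨a, P', hP, rfl⟩ h
    rw [show P' = 0 from hP] at h ⊢
    refine ⟨0, rfl, ?_⟩
    have : a = 0 := by simpa using h
    ext x; simp [this]
  | succ n ih =>
    rintro P ⟨a, P', hP, rfl⟩ h
    have h1 : P' 1 = 0 := by
      simpa [pow_succ, D_one hD] using h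
    obtain ⟨Q, hQ, rfl⟩ := ih hP h1
    exact ⟨_, ⟨a, Q, hQ, rfl⟩, by rw [pow_succ]; noncomm_ring⟩

theorem ker_fg (hsurj : Function.Surjective D) (hker : (LinearMap.ker D).FG) {n : ℕ} :
    ∀ {P : Module.End C F}, IsOp D n P → P ≠ 0 → (LinearMap.ker P).FG := by
  induction n with
  | zero => intro P h h0; exact absurd h h0
  | succ n ih =>
    intro P h h0
    by_cases hk : LinearMap.ker P = ⊥
    · rw [hk]; exact Submodule.fg_bot
    obtain ⟨u, hu, hu0⟩ := (Submodule.ne_bot_iff _).1 hk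
    have hmu : Function.Surjective (LinearMap.mulLeft C u) := fun y =>
      ⟨u⁻¹ * y, by simp [hu0]⟩
    obtain ⟨Q, hQ, e⟩ := factor hD (isOp_mlr hD u h) (by simpa using hu)
    have hQ0 : Q ≠ 0 := by
      rintro rfl
      apply h0
      have : P * LinearMap.mulLeft C u * LinearMap.mulLeft C u⁻¹ = 0 := by rw [e]; simp
      rwa [mul_assoc, ml_inv hu0, mul_one] at this
    have fQ := ih hQ hQ0
    have f1 : (LinearMap.ker (Q * D)).FG := by
      refine Submodule.fg_of_fg_map_of_fg_inf_ker D ?_ ?_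
      · have : (LinearMap.ker (Q * D)).map D = LinearMap.ker Q := by
          rw [Module.End.mul_eq_comp, LinearMap.ker_comp, Submodule.map_comap_eq_of_surjective hsurj]
        rwa [this]
      · have : LinearMap.ker (Q * D) ⊓ LinearMap.ker D = LinearMap.ker D := by
          rw [inf_eq_right, Module.End.mul_eq_comp]
          exact LinearMap.ker_le_ker_comp _ _
        rwa [this]
    rw [← e, Module.End.mul_eq_comp, LinearMap.ker_comp] at f1
    rw [← Submodule.map_comap_eq_of_surjective hmu (LinearMap.ker P)]
    exact f1.map _

omit hD in
theorem isOp_sum {n : ℕ} : ∀ {P : Module.End C F}, IsOp D n P →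
    ∃ a : ℕ → F, ∀ x, P x = ∑ k ∈ Finset.range n, a k * D^[k] x := by
  induction n with
  | zero => rintro P rfl; exact ⟨0, by simp⟩
  | succ n ih =>
    rintro P ⟨b, P', hP, rfl⟩
    obtain ⟨a, ha⟩ := ih hP
    refine ⟨fun k => if k = n then b else a k, fun x => ?_⟩
    rw [Finset.sum_range_succ, LinearMap.add_apply, ha, add_comm]
    congr 1
    · refine Finset.sum_congr rfl fun k hk => ?_
      simp [(Finset.mem_range.1 hk).ne]
    · simp [Module.End.pow_apply]

omit hD in
theorem op_surj (hlc : LinearlyClosed D) {n : ℕ} :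
    ∀ {P : Module.End C F}, IsOp D n P → P ≠ 0 → Function.Surjective P := by
  induction n with
  | zero => intro P h h0; exact absurd h h0
  | succ n ih =>
    rintro P ⟨b, P', hP, rfl⟩ h0
    by_cases hb : b = 0
    · have e : LinearMap.mulLeft C b * D ^ n + P' = P' := by rw [hb]; simp
      rw [e] at h0 ⊢
      exact ih hP h0
    intro y
    obtain ⟨a, ha⟩ := isOp_sum hP
    obtain ⟨u, hu⟩ := (hlc n (fun k => if k = n then b else a k) (by simpa using hb)).1 y
    refine ⟨u, ?_⟩
    rw [← hu, Finset.sum_range_succ, LinearMap.add_apply, ha, add_comm]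
    congr 1
    · refine Finset.sum_congr rfl fun k hk => ?_
      simp [(Finset.mem_range.1 hk).ne]
    · simp [Module.End.pow_apply]

/-- The ring of differential operators. -/
def opRing : Subring (Module.End C F) where
  carrier := {P | ∃ n, IsOp D n P}
  mul_mem' := by
    rintro P Q ⟨m, hm⟩ ⟨n, hn⟩
    exact ⟨m + n, isOp_mul hD hm hn⟩
  one_mem' := ⟨1, 1, 0, rfl, by ext x; simp⟩
  add_mem' := by
    rintro P Q ⟨m, hm⟩ ⟨n, hn⟩
    exact ⟨m + n, isOp_add (isOp_mono (by omega) hm) (isOp_mono (by omega) hn)⟩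
  zero_mem' := ⟨0, rfl⟩
  neg_mem' := by
    rintro P ⟨m, hm⟩
    exact ⟨m, isOp_neg hm⟩

open Classical in
theorem ops_good (hlc : LinearlyClosed D) (hker : (LinearMap.ker D).FG) (l : ℕ)
    (M : Matrix (Fin l) (Fin l) (opRing hD)) :
    GoodMap (actMat C M : (Fin l → F) →ₗ[C] (Fin l → F)) := by
  have hsurj : Function.Surjective D := by
    intro y
    obtain ⟨u, hu⟩ := (hlc 1 (fun k => if k = 1 then 1 else 0) (by simp)).1 y
    exact ⟨u, by simpa [Finset.sum_range_succ] using hu⟩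
  let deg : opRing hD → ℕ := fun P => Nat.find P.2
  have hdeg : ∀ P : opRing hD, IsOp D (deg P) P.1 := fun P => Nat.find_spec P.2
  have hdeg' : ∀ (P : opRing hD) n, IsOp D n P.1 → deg P ≤ n := fun P n h => Nat.find_min' P.2 h
  have lead : ∀ P : opRing hD, P ≠ 0 → ∃ (n : ℕ) (a : F) (P' : Module.End C F), a ≠ 0 ∧ IsOp D n P' ∧
      P.1 = LinearMap.mulLeft C a * D ^ n + P' ∧ deg P = n + 1 := by
    intro P hP
    have h := hdeg P
    rcases hn : deg P with _ | n
    · rw [hn] at h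
      have h' : P.1 = 0 := h
      exact absurd (Subtype.ext h') hP
    · rw [hn] at h
      obtain ⟨a, P', h1, h2⟩ := h
      refine ⟨n, a, P', ?_, h1, h2, rfl⟩
      rintro rfl
      have : P.1 = P' := by rw [h2]; simp
      have := hdeg' P n (this ▸ h1)
      omega
  refine good_all deg ?_ ?_ ?_ ?_ l M
  · intro A P hP
    obtain ⟨n, a, P', ha, h1, h2, h3⟩ := lead P hP
    obtain ⟨Q, hQ, hR⟩ := div_left hD ha h1 _ _ (hdeg A)
    refine ⟨⟨Q, hQ⟩, ?_⟩
    rw [h3, Nat.lt_succ_iff]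
    apply hdeg'
    rw [← h2] at hR
    exact hR
  · intro A P hP
    obtain ⟨n, a, P', ha, h1, h2, h3⟩ := lead P hP
    obtain ⟨Q, hQ, hR⟩ := div_right hD ha h1 _ _ (hdeg A)
    refine ⟨⟨Q, hQ⟩, ?_⟩
    rw [h3, Nat.lt_succ_iff]
    apply hdeg'
    rw [← h2] at hR
    exact hR
  · intro P hP
    have h0 : P.1 ≠ 0 := fun h => hP (Subtype.ext h)
    have e : actS C F P = P.1 := by ext x; rfl
    left
    rw [e]
    exact ⟨op_surj hlc (hdeg P) h0, ker_fg hD hsurj hker (hdeg P) h0⟩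
  · intro h
    have := (LinearMap.injective_iff_surjective (f := D)).2 hsurj
    exact one_ne_zero (this ((D_one hD).trans (map_zero D).symm))

end ops

/-- Let `F` be a linearly closed differential field of characteristic zero with constants
`C`, and let `M` be an `ℓ×ℓ` matrix differential operator over `F`.  Then the following
are equivalent: (i) `ker M` is finite-dimensional over `C`; (ii) the image `M(F^ℓ)` has
finite codimension over `C` in `F^ℓ`; (iii) `M : F^ℓ → F^ℓ` is surjective. -/
theorem stmt_4 (F : Type*) [Field F] [CharZero F] (d : F → F) (hd : IsDerivation d)
    (hlc : LinearlyClosed d)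
    (C : Subfield F) (hC : ∀ x : F, x ∈ C ↔ d x = 0)
    (l N : ℕ) (a : Fin l → Fin l → ℕ → F)
    (Ker Im : Submodule C (Fin l → F))
    (hKer : ∀ u : Fin l → F, u ∈ Ker ↔ matDiffOp d N a u = 0)
    (hIm : ∀ v : Fin l → F, v ∈ Im ↔ ∃ u : Fin l → F, matDiffOp d N a u = v) :
    (Module.Finite C Ker ↔ Module.Finite C ((Fin l → F) ⧸ Im)) ∧
    (Module.Finite C ((Fin l → F) ⧸ Im) ↔ Function.Surjective (matDiffOp d N a)) := by
  let D : Module.End C F :=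
    { toFun := d
      map_add' := hd.map_add
      map_smul' := by
        intro c x
        have : d (c : F) = 0 := (hC _).1 c.2
        simp [Subfield.smul_def, hd.leibniz, this] }
  have hD : ∀ a b : F, D (a * b) = D a * b + a * D b := hd.leibniz
  have hker : (LinearMap.ker D).FG := by
    refine ⟨{1}, ?_⟩
    ext x
    rw [Finset.coe_singleton, Submodule.mem_span_singleton, LinearMap.mem_ker]
    change _ ↔ d x = 0
    rw [← hC]
    constructor
    · rintro ⟨c, rfl⟩
      simp [Subfield.smul_def]
    · intro h
      exact ⟨⟨x, h⟩, by simp [Subfield.smul_def]⟩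
  have hmem : ∀ (b : ℕ → F) (n : ℕ),
      (∑ k ∈ Finset.range n, LinearMap.mulLeft C (b k) * D ^ k) ∈ opRing hD := by
    intro b n
    exact sum_mem fun k _ => ⟨k + 1, isOp_pow k _⟩
  let M : Matrix (Fin l) (Fin l) (opRing hD) := Matrix.of fun i j => ⟨_, hmem (a i j) (N + 1)⟩
  have hM : ∀ u, actMat C M u = matDiffOp d N a u := by
    intro u
    ext i
    rw [actMat_apply]
    refine Finset.sum_congr rfl fun j _ => ?_
    change (∑ k ∈ Finset.range (N+1), LinearMap.mulLeft C (a i j k) * D ^ k) (u j) = _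
    rw [LinearMap.sum_apply]
    refine Finset.sum_congr rfl fun k _ => ?_
    simp only [Module.End.mul_apply, LinearMap.mulLeft_apply, Module.End.pow_apply]
    rfl
  have hg := ops_good hD hlc hker l M
  have eK : Ker = LinearMap.ker (actMat C M : (Fin l → F) →ₗ[C] (Fin l → F)) := by
    ext u; rw [hKer, LinearMap.mem_ker, hM]
  have eI : Im = LinearMap.range (actMat C M : (Fin l → F) →ₗ[C] (Fin l → F)) := by
    ext u; rw [hIm, LinearMap.mem_range]; simp only [hM]
  have eS : matDiffOp d N a = actMat C M := by ext1 u; rw [hM]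
  rw [eS, Module.Finite.iff_fg, eK, eI]
  rcases hg with ⟨h1, h2⟩ | ⟨h1, h2⟩
  · have h3 : Module.Finite C ((Fin l → F) ⧸
        LinearMap.range (actMat C M : (Fin l → F) →ₗ[C] (Fin l → F))) := by
      have := LinearMap.range_eq_top.2 h1
      rw [this]
      infer_instance
    exact ⟨⟨fun _ => h3, fun _ => h2⟩, ⟨fun _ => h1, fun _ => h3⟩⟩
  · refine ⟨⟨fun h => absurd h h1, fun h => absurd h h2⟩, ⟨fun h => absurd h h2, fun h => ?_⟩⟩
    have := LinearMap.range_eq_top.2 h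
    rw [this] at h2
    exact (h2 inferInstance).elim
end

section
/- Let F be a linearly closed differential field of characteristic zero with derivation ∂ and constants C = {c ∈ F : ∂c = 0}, and let M : F^ℓ → F^m be an m×ℓ matrix differential operator over F, i.e., (Mu)_i = Σ_{j=1}^ℓ Σ_{n≥0} a_{ij,n} ∂^n u_j for 1 ≤ i ≤ m, with a_{ij,n} ∈ F, finitely many nonzero. If the kernel {u ∈ F^ℓ : Mu = 0} is finite-dimensional over C and the image M(F^ℓ) has finite codimension over C in F^m, then necessarily m = ℓ. -/
/-- The `m×ℓ` matrix differential operator with coefficients `a i j n` (nonzero only for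
`n ≤ N`): `(Mu)_i = Σ_j Σ_{n=0}^N a_{ij,n} d^n (u j)`. -/
noncomputable def rectDiffOp {F : Type*} [Field F] (d : F → F) {m l : ℕ} (N : ℕ)
    (a : Fin m → Fin l → ℕ → F) (u : Fin l → F) : Fin m → F :=
  fun i => ∑ j, ∑ n ∈ Finset.range (N + 1), a i j n * d^[n] (u j)

section helpers

variable {F : Type*} [Field F] {d : F → F}

lemma IsDerivation.zero (hd : IsDerivation d) : d 0 = 0 := by
  have := hd.map_add 0 0
  simpa using this

lemma IsDerivation.one (hd : IsDerivation d) : d 1 = 0 := by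
  have := hd.leibniz 1 1
  simpa using this

lemma IsDerivation.sum (hd : IsDerivation d) {ι : Type*} (s : Finset ι) (f : ι → F) :
    d (∑ i ∈ s, f i) = ∑ i ∈ s, d (f i) := by
  classical
  induction s using Finset.induction_on with
  | empty => simpa using hd.zero
  | insert a s ha ih => rw [Finset.sum_insert ha, Finset.sum_insert ha, hd.map_add, ih]

lemma IsDerivation.iter_add (hd : IsDerivation d) (n : ℕ) (a b : F) :
    d^[n] (a + b) = d^[n] a + d^[n] b := by
  induction n with
  | zero => rfl
  | succ n ih => simp only [Function.iterate_succ_apply', ih, hd.map_add]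

lemma IsDerivation.iter_zero (hd : IsDerivation d) (n : ℕ) : d^[n] 0 = 0 := by
  induction n with
  | zero => rfl
  | succ n ih => simp only [Function.iterate_succ_apply', ih, hd.zero]

lemma IsDerivation.iter_sum (hd : IsDerivation d) (n : ℕ) {ι : Type*} (s : Finset ι) (f : ι → F) :
    d^[n] (∑ i ∈ s, f i) = ∑ i ∈ s, d^[n] (f i) := by
  induction n with
  | zero => rfl
  | succ n ih => simp only [Function.iterate_succ_apply', ih, hd.sum]

lemma IsDerivation.iter_smul (hd : IsDerivation d) (n : ℕ) (c u : F) (hc : d c = 0) :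
    d^[n] (c * u) = c * d^[n] u := by
  induction n with
  | zero => rfl
  | succ n ih => simp only [Function.iterate_succ_apply', ih, hd.leibniz, hc]; ring

lemma pad_sum (f : ℕ → F → F) (hf : ∀ n, f n 0 = 0) {p S : ℕ} (h : p ≤ S) (c : ℕ → F) :
    ∑ s ∈ Finset.range S, f s (if s < p then c s else 0) = ∑ s ∈ Finset.range p, f s (c s) := by
  rw [← Finset.sum_subset (Finset.range_mono h)]
  · exact Finset.sum_congr rfl fun x hx => by rw [if_pos (Finset.mem_range.1 hx)]
  · intro x _ hx
    rw [if_neg (by simpa using hx), hf]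

/-- derivative of a left form -/
lemma IsDerivation.d_left (hd : IsDerivation d) (K : ℕ) (e : ℕ → F) :
    ∃ e' : ℕ → F, e' (K + 1) = e K ∧ ∀ u : F,
      d (∑ n ∈ Finset.range (K + 1), e n * d^[n] u)
        = ∑ n ∈ Finset.range (K + 2), e' n * d^[n] u := by
  refine ⟨fun n => (if n < K + 1 then d (e n) else 0) + (if n = 0 then 0 else e (n - 1)),
    by simp, fun u => ?_⟩
  simp only [add_mul, Finset.sum_add_distrib]
  rw [pad_sum (fun s x => x * d^[s] u) (fun n => by simp) (Nat.le_succ _),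
    Finset.sum_range_succ' (n := K + 1), hd.sum]
  simp [hd.leibniz, Finset.sum_add_distrib, Function.iterate_succ_apply']

/-- right form to left form -/
lemma IsDerivation.right_left (hd : IsDerivation d) (K : ℕ) : ∀ q : ℕ → F,
    ∃ e : ℕ → F, e K = q K ∧ ∀ u : F,
      ∑ n ∈ Finset.range (K + 1), d^[n] (q n * u)
        = ∑ n ∈ Finset.range (K + 1), e n * d^[n] u := by
  induction K with
  | zero => intro q; exact ⟨q, rfl, fun u => by simp⟩
  | succ K ih =>
    intro q
    obtain ⟨e, he, h⟩ := ih (fun n => q (n + 1))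
    obtain ⟨e', he', h'⟩ := hd.d_left K e
    refine ⟨fun n => e' n + if n = 0 then q 0 else 0, by simp [he', he], fun u => ?_⟩
    rw [Finset.sum_range_succ']
    simp only [add_mul, Finset.sum_add_distrib]
    rw [← h', ← h, hd.sum]
    simp [Function.iterate_succ_apply']

lemma surj_left (hlc : LinearlyClosed d) (K : ℕ) (q : ℕ → F)
    (hq : ∃ k, k < K + 1 ∧ q k ≠ 0) (b : F) :
    ∃ u, ∑ n ∈ Finset.range (K + 1), q n * d^[n] u = b := by
  induction K with
  | zero =>
    obtain ⟨k, hk, h⟩ := hq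
    obtain rfl : k = 0 := by omega
    exact (hlc 0 q h).1 b
  | succ K ih =>
    by_cases h0 : q (K + 1) = 0
    · obtain ⟨k, hk, h⟩ := hq
      have : k ≠ K + 1 := by rintro rfl; exact h h0
      obtain ⟨u, hu⟩ := ih ⟨k, by omega, h⟩
      exact ⟨u, by rw [Finset.sum_range_succ, hu, h0]; simp⟩
    · exact (hlc (K + 1) q h0).1 b

lemma surj_right (hd : IsDerivation d) (hlc : LinearlyClosed d) (K : ℕ) (q : ℕ → F)
    (hq : ∃ k, k < K + 1 ∧ q k ≠ 0) (b : F) :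
    ∃ u, ∑ n ∈ Finset.range (K + 1), d^[n] (q n * u) = b := by
  induction K with
  | zero =>
    obtain ⟨k, hk, h⟩ := hq
    obtain rfl : k = 0 := by omega
    exact ⟨b / q 0, by simp; field_simp⟩
  | succ K ih =>
    by_cases h0 : q (K + 1) = 0
    · obtain ⟨k, hk, h⟩ := hq
      have : k ≠ K + 1 := by rintro rfl; exact h h0
      obtain ⟨u, hu⟩ := ih ⟨k, by omega, h⟩
      exact ⟨u, by rw [Finset.sum_range_succ, hu, h0, zero_mul, hd.iter_zero, add_zero]⟩
    · obtain ⟨e, he, h⟩ := hd.right_left (K + 1) q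
      obtain ⟨u, hu⟩ := (hlc (K + 1) e (he ▸ h0)).1 b
      exact ⟨u, by rw [h, hu]⟩

/-- rewriting `d^k (a d^n u)` in left form -/
lemma IsDerivation.to_left (hd : IsDerivation d) (a : F) (k n : ℕ) :
    ∃ c : ℕ → F, ∀ u : F,
      d^[k] (a * d^[n] u) = ∑ s ∈ Finset.range (n + k + 1), c s * d^[s] u := by
  induction k with
  | zero =>
    refine ⟨fun s => if s = n then a else 0, fun u => ?_⟩
    simp
  | succ k ih =>
    obtain ⟨c, hc⟩ := ih
    obtain ⟨c', -, hc'⟩ := hd.d_left (n + k) c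
    exact ⟨c', fun u => by rw [Function.iterate_succ_apply', hc, hc']; rfl⟩

/-- rewriting `a d^p u` in right form -/
lemma IsDerivation.to_right (hd : IsDerivation d) (p : ℕ) : ∀ a : F,
    ∃ c : ℕ → F, ∀ u : F,
      a * d^[p] u = ∑ s ∈ Finset.range (p + 1), d^[s] (c s * u) := by
  induction p with
  | zero => intro a; exact ⟨fun _ => a, fun u => by simp⟩
  | succ p ih =>
    intro a
    obtain ⟨c, hc⟩ := ih a
    obtain ⟨c', hc'⟩ := ih (-d a)
    refine ⟨fun s => (if s < p + 1 then c' s else 0) + (if s = 0 then 0 else c (s - 1)),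
      fun u => ?_⟩
    have e1 : a * d^[p + 1] u = (-d a) * d^[p] u + d (a * d^[p] u) := by
      rw [Function.iterate_succ_apply', hd.leibniz]; ring
    rw [e1, hc, hc', hd.sum]
    simp only [add_mul, hd.iter_add, Finset.sum_add_distrib]
    rw [pad_sum (fun s x => d^[s] (x * u)) (fun n => by simp [hd.iter_zero]) (Nat.le_succ _),
      Finset.sum_range_succ' (n := p + 1)]
    simp [Function.iterate_succ_apply']

lemma exists_sol (l m K S : ℕ) (h : m * S < l * (K + 1)) (A : Fin m → ℕ → Fin l → ℕ → F) :
    ∃ q : Fin l → ℕ → F, (∃ j k, k < K + 1 ∧ q j k ≠ 0) ∧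
      ∀ i, ∀ s ∈ Finset.range S, ∑ j, ∑ k ∈ Finset.range (K + 1), A i s j k * q j k = 0 := by
  let T : Matrix (Fin m × Fin S) (Fin l × Fin (K + 1)) F :=
    Matrix.of fun x y => A x.1 x.2 y.1 y.2
  have hk := LinearMap.ker_ne_bot_of_finrank_lt (f := T.mulVecLin) (by simpa using h)
  obtain ⟨x, hx, hx0⟩ := Submodule.exists_mem_ne_zero_of_ne_bot hk
  refine ⟨fun j k => if hk : k < K + 1 then x (j, ⟨k, hk⟩) else 0, ?_, ?_⟩
  · obtain ⟨⟨j, k⟩, hjk⟩ := Function.ne_iff.1 hx0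
    exact ⟨j, k, k.2, by beta_reduce; rw [dif_pos k.2]; exact hjk⟩
  · intro i s hs
    have := congrFun (LinearMap.mem_ker.1 hx) (i, ⟨s, Finset.mem_range.1 hs⟩)
    simp only [Matrix.mulVecLin_apply, Matrix.mulVec, dotProduct, Fintype.sum_prod_type] at this
    refine Eq.trans ?_ this
    refine Finset.sum_congr rfl fun j _ => ?_
    rw [Finset.sum_range]
    refine Finset.sum_congr rfl fun k _ => ?_
    beta_reduce; rw [dif_pos k.2]; rfl

lemma arith (m l N : ℕ) (h : m < l) : m * (N + m * N + 1) < l * (m * N + 1) := by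
  have : (m + 1) * (m * N + 1) ≤ l * (m * N + 1) := Nat.mul_le_mul_right _ h
  nlinarith

lemma const_not_finite (hd : IsDerivation d) (hlc : LinearlyClosed d) (C : Subfield F)
    (hC : ∀ x : F, x ∈ C ↔ d x = 0) : ¬ Module.Finite C F := by
  intro hfin
  let D : F →ₗ[C] F :=
    { toFun := d
      map_add' := hd.map_add
      map_smul' := fun c u => by
        have := (hC c).1 c.2
        simp [Subfield.smul_def, hd.leibniz, this] }
  have hs : Function.Surjective D := by
    intro b
    obtain ⟨u, hu⟩ := (hlc 1 (fun n => if n = 1 then 1 else 0) (by simp)).1 b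
    exact ⟨u, by change d u = b; simpa [Finset.sum_range_succ] using hu⟩
  have hi : Function.Injective D := LinearMap.injective_iff_surjective.2 hs
  have : (1 : F) = 0 := hi (by show d 1 = d 0; rw [hd.one, hd.zero])
  exact one_ne_zero this

/-- wide operators have a right annihilator -/
lemma wide (hd : IsDerivation d) (m l N : ℕ) (h : m < l) (a : Fin m → Fin l → ℕ → F) :
    ∃ (K : ℕ) (q : Fin l → ℕ → F), (∃ j k, k < K + 1 ∧ q j k ≠ 0) ∧
      ∀ u : F, rectDiffOp d N a
        (fun j => ∑ k ∈ Finset.range (K + 1), d^[k] (q j k * u)) = 0 := by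
  choose c hc using fun p a => hd.to_right (d := d) p a
  let K := m * N
  let S := N + K + 1
  obtain ⟨q, hq, hq0⟩ := exists_sol l m K S (arith m l N h) (fun i s j k =>
    ∑ n ∈ Finset.range (N + 1), if s < n + k + 1 then c (n + k) (a i j n) s else 0)
  refine ⟨K, q, hq, fun u => funext fun i => ?_⟩
  have key : ∀ j, ∀ n ∈ Finset.range (N + 1), ∀ k ∈ Finset.range (K + 1),
      a i j n * d^[n] (d^[k] (q j k * u)) = ∑ s ∈ Finset.range S,
        d^[s] ((if s < n + k + 1 then c (n + k) (a i j n) s else 0) * q j k * u) := by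
    intro j n hn k hk
    rw [Finset.mem_range] at hn hk
    rw [pad_sum (fun s x => d^[s] (x * q j k * u)) (fun n => by simp [hd.iter_zero])
      (by omega), ← Function.iterate_add_apply, hc]
    simp only [mul_assoc]
  calc rectDiffOp d N a _ i
      = ∑ j, ∑ n ∈ Finset.range (N + 1), ∑ k ∈ Finset.range (K + 1), ∑ s ∈ Finset.range S,
        d^[s] ((if s < n + k + 1 then c (n + k) (a i j n) s else 0) * q j k * u) := by
        unfold rectDiffOp
        refine Finset.sum_congr rfl fun j _ => Finset.sum_congr rfl fun n hn => ?_
        rw [hd.iter_sum, Finset.mul_sum]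
        exact Finset.sum_congr rfl fun k hk => key j n hn k hk
    _ = ∑ s ∈ Finset.range S, d^[s] ((∑ j, ∑ k ∈ Finset.range (K + 1),
        (∑ n ∈ Finset.range (N + 1), if s < n + k + 1 then c (n + k) (a i j n) s else 0)
          * q j k) * u) := by
        simp only [Finset.sum_mul, hd.iter_sum]
        rw [Finset.sum_comm (s := Finset.range S)]
        refine Finset.sum_congr rfl fun j _ => ?_
        rw [Finset.sum_comm, Finset.sum_comm (s := Finset.range S)]
        refine Finset.sum_congr rfl fun k _ => ?_
        rw [Finset.sum_comm]
    _ = 0 := Finset.sum_eq_zero fun s hs => by rw [hq0 i s hs, zero_mul, hd.iter_zero]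

/-- tall operators have a left annihilator -/
lemma tall (hd : IsDerivation d) (m l N : ℕ) (h : l < m) (a : Fin m → Fin l → ℕ → F) :
    ∃ (K : ℕ) (q : Fin m → ℕ → F), (∃ j k, k < K + 1 ∧ q j k ≠ 0) ∧
      ∀ u : Fin l → F, ∑ i, ∑ k ∈ Finset.range (K + 1), q i k * d^[k] (rectDiffOp d N a u i) = 0 := by
  choose c hc using fun a k n => hd.to_left (d := d) a k n
  let K := l * N
  let S := N + K + 1
  obtain ⟨q, hq, hq0⟩ := exists_sol m l K S (arith l m N h) (fun j s i k =>
    ∑ n ∈ Finset.range (N + 1), if s < n + k + 1 then c (a i j n) k n s else 0)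
  refine ⟨K, q, hq, fun u => ?_⟩
  have key : ∀ i j, ∀ n ∈ Finset.range (N + 1), ∀ k ∈ Finset.range (K + 1),
      d^[k] (a i j n * d^[n] (u j)) = ∑ s ∈ Finset.range S,
        (if s < n + k + 1 then c (a i j n) k n s else 0) * d^[s] (u j) := by
    intro i j n hn k hk
    rw [Finset.mem_range] at hn hk
    rw [pad_sum (fun s x => x * d^[s] (u j)) (fun n => by simp) (by omega), hc]
  calc _ = ∑ i, ∑ k ∈ Finset.range (K + 1), ∑ j, ∑ n ∈ Finset.range (N + 1),
        ∑ s ∈ Finset.range S,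
        (if s < n + k + 1 then c (a i j n) k n s else 0) * q i k * d^[s] (u j) := by
        unfold rectDiffOp
        refine Finset.sum_congr rfl fun i _ => Finset.sum_congr rfl fun k hk => ?_
        rw [hd.iter_sum, Finset.mul_sum]
        refine Finset.sum_congr rfl fun j _ => ?_
        rw [hd.iter_sum, Finset.mul_sum]
        refine Finset.sum_congr rfl fun n hn => ?_
        rw [key i j n hn k hk, Finset.mul_sum]
        exact Finset.sum_congr rfl fun s _ => by ring
    _ = ∑ j, ∑ s ∈ Finset.range S, (∑ i, ∑ k ∈ Finset.range (K + 1),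
        (∑ n ∈ Finset.range (N + 1), if s < n + k + 1 then c (a i j n) k n s else 0)
          * q i k) * d^[s] (u j) := by
        simp only [Finset.sum_mul]
        have e1 : ∀ f : Fin m → ℕ → Fin l → ℕ → ℕ → F,
            ∑ i, ∑ k ∈ Finset.range (K + 1), ∑ j, ∑ n ∈ Finset.range (N + 1),
              ∑ s ∈ Finset.range S, f i k j n s
            = ∑ j, ∑ s ∈ Finset.range S, ∑ i, ∑ k ∈ Finset.range (K + 1),
              ∑ n ∈ Finset.range (N + 1), f i k j n s := by
          intro f
          have : ∀ i, ∑ k ∈ Finset.range (K + 1), ∑ j, ∑ n ∈ Finset.range (N + 1),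
              ∑ s ∈ Finset.range S, f i k j n s = ∑ j, ∑ s ∈ Finset.range S,
              ∑ k ∈ Finset.range (K + 1), ∑ n ∈ Finset.range (N + 1), f i k j n s := by
            intro i
            rw [Finset.sum_comm]
            refine Finset.sum_congr rfl fun j _ => ?_
            rw [Finset.sum_comm (s := Finset.range S)]
            exact Finset.sum_congr rfl fun k _ => Finset.sum_comm
          simp only [this]
          rw [Finset.sum_comm]
          exact Finset.sum_congr rfl fun j _ => Finset.sum_comm
        exact e1 _
    _ = 0 := Finset.sum_eq_zero fun j _ => Finset.sum_eq_zero fun s hs => by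
        rw [hq0 j s hs, zero_mul]

end helpers

/-- Let `F` be a linearly closed differential field of characteristic zero with constants
`C`, and let `M : F^ℓ → F^m` be an `m×ℓ` matrix differential operator over `F`.  If
`ker M` is finite-dimensional over `C` and the image `M(F^ℓ)` has finite codimension over
`C` in `F^m`, then necessarily `m = ℓ`. -/
theorem stmt_5 (F : Type*) [Field F] [CharZero F] (d : F → F) (hd : IsDerivation d)
    (hlc : LinearlyClosed d)
    (C : Subfield F) (hC : ∀ x : F, x ∈ C ↔ d x = 0)
    (m l N : ℕ) (a : Fin m → Fin l → ℕ → F)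
    (Ker : Submodule C (Fin l → F)) (Im : Submodule C (Fin m → F))
    (hKer : ∀ u : Fin l → F, u ∈ Ker ↔ rectDiffOp d N a u = 0)
    (hIm : ∀ v : Fin m → F, v ∈ Im ↔ ∃ u : Fin l → F, rectDiffOp d N a u = v)
    (hfinKer : Module.Finite C Ker)
    (hfinCoker : Module.Finite C ((Fin m → F) ⧸ Im)) :
    m = l := by
  rcases lt_trichotomy m l with h | h | h
  · exfalso
    obtain ⟨K, q, ⟨j, hj⟩, hq⟩ := wide hd m l N h a
    refine const_not_finite hd hlc C hC ?_
    refine Module.Finite.of_surjective ((LinearMap.proj j : (Fin l → F) →ₗ[C] F) ∘ₗ Ker.subtype) ?_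
    intro b
    obtain ⟨u, hu⟩ := surj_right hd hlc K (q j) hj b
    exact ⟨⟨_, (hKer _).2 (hq u)⟩, hu⟩
  · exact h
  · exfalso
    obtain ⟨K, q, ⟨i, hi⟩, hq⟩ := tall hd m l N h a
    refine const_not_finite hd hlc C hC ?_
    let P : (Fin m → F) →ₗ[C] F :=
      { toFun := fun v => ∑ i, ∑ k ∈ Finset.range (K + 1), q i k * d^[k] (v i)
        map_add' := fun v w => by
          simp [hd.iter_add, mul_add, Finset.sum_add_distrib]
        map_smul' := fun c v => by
          have := (hC c).1 c.2
          simp only [Pi.smul_apply, Subfield.smul_def, smul_eq_mul, hd.iter_smul _ _ _ this,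
            Finset.mul_sum, RingHom.id_apply, mul_left_comm] }
    have hP : Im ≤ LinearMap.ker P := by
      intro v hv
      obtain ⟨u, rfl⟩ := (hIm v).1 hv
      exact hq u
    refine Module.Finite.of_surjective (Im.liftQ P hP) ?_
    intro b
    obtain ⟨u, hu⟩ := surj_left hlc K (q i) hi b
    refine ⟨Im.mkQ (Pi.single i u), ?_⟩
    rw [Submodule.mkQ_apply, Submodule.liftQ_apply]
    show ∑ i', ∑ k ∈ Finset.range (K + 1), q i' k * d^[k] ((Pi.single i u : Fin m → F) i') = b
    rw [Finset.sum_eq_single i]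
    · simpa using hu
    · intro i' _ hne
      simp [Pi.single_eq_of_ne hne, hd.iter_zero]
    · simp
end

section
/- Let F be a linearly closed differential field of characteristic zero and let K(u) = Σ_{n=0}^N k_n ∂^n u be a nonzero scalar differential operator over F (k_0,…,k_N ∈ F, not all zero). Then for every scalar differential operator S over F that is skewadjoint, i.e., S*(u) = −S(u) for all u ∈ F, there exists a scalar differential operator P over F such that K(P(u)) − P*(K*(u)) = S(u) for all u ∈ F. -/
/-- The scalar differential operator `L(u) = Σ_{n=0}^M a_n d^n u`. -/
noncomputable def scalOp {F : Type*} [Field F] (d : F → F) (M : ℕ) (a : ℕ → F) (u : F) : F :=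
  ∑ n ∈ Finset.range (M + 1), a n * d^[n] u

/-- The formal adjoint `L*(u) = Σ_{n=0}^M (−1)^n d^n (a_n u)`. -/
noncomputable def scalOpAdj {F : Type*} [Field F] (d : F → F) (M : ℕ) (a : ℕ → F) (u : F) : F :=
  ∑ n ∈ Finset.range (M + 1), (-1 : F) ^ n * d^[n] (a n * u)

namespace Pf

def E (F : Type*) [Field F] := AddMonoid.End F × (AddMonoid.End F)ᵐᵒᵖ

instance instRingE (F : Type*) [Field F] : Ring (E F) :=
  inferInstanceAs (Ring (AddMonoid.End F × (AddMonoid.End F)ᵐᵒᵖ))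

section
variable {F : Type*} [Field F]

/-- multiplication operator -/
def m (f : F) : E F := (AddMonoidHom.mulLeft f, MulOpposite.op (AddMonoidHom.mulLeft f))

/-- derivation as additive endomorphism -/
def dd {d : F → F} (hd : IsDerivation d) : AddMonoid.End F :=
  AddMonoidHom.mk' d hd.map_add

def D {d : F → F} (hd : IsDerivation d) : E F := (dd hd, MulOpposite.op (-(dd hd)))

def st (A : E F) : E F := (A.2.unop, MulOpposite.op A.1)

theorem ext_E {A B : E F} (h1 : ∀ u, A.1 u = B.1 u) (h2 : ∀ u, A.2.unop u = B.2.unop u) :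
    A = B := by
  apply Prod.ext
  · exact AddMonoidHom.ext h1
  · apply MulOpposite.unop_injective
    exact AddMonoidHom.ext h2

theorem st_st (A : E F) : st (st A) = A := rfl
theorem st_add (A B : E F) : st (A + B) = st A + st B := rfl
theorem st_neg (A : E F) : st (-A) = - st A := rfl
theorem st_sub (A B : E F) : st (A - B) = st A - st B := rfl
theorem st_zero : st (0 : E F) = 0 := rfl
theorem st_one : st (1 : E F) = 1 := rfl
theorem st_mul (A B : E F) : st (A * B) = st B * st A := rfl
theorem st_m (f : F) : st (m f) = m f := rfl
theorem st_D {d : F → F} (hd : IsDerivation d) : st (D hd) = - D hd := by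
  apply ext_E
  · intro u; rfl
  · intro u
    show d u = - - d u
    rw [neg_neg]

theorem st_sum {ι : Type*} (s : Finset ι) (f : ι → E F) :
    st (∑ i ∈ s, f i) = ∑ i ∈ s, st (f i) := by
  classical
  induction s using Finset.induction_on with
  | empty => rfl
  | insert a s ha ih => rw [Finset.sum_insert ha, Finset.sum_insert ha, st_add, ih]

theorem st_pow (A : E F) (n : ℕ) : st (A ^ n) = st A ^ n := by
  induction n with
  | zero => rfl
  | succ n ih => rw [pow_succ, st_mul, ih, pow_succ']

theorem m_mul (f g : F) : m f * m g = m (f * g) := by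
  apply ext_E
  · intro u; exact (mul_assoc f g u).symm
  · intro u; show g * (f * u) = f * g * u; ring
theorem m_add (f g : F) : m (f + g) = m f + m g := by
  apply ext_E
  · intro u; exact add_mul f g u
  · intro u; exact add_mul f g u
theorem m_zero : m (0 : F) = 0 := by
  apply ext_E
  · intro u; exact zero_mul u
  · intro u; exact zero_mul u
theorem m_one : m (1 : F) = 1 := by
  apply ext_E
  · intro u; exact one_mul u
  · intro u; exact one_mul u
theorem m_neg (f : F) : m (-f) = - m f := by
  apply ext_E
  · intro u; exact neg_mul f u
  · intro u; exact neg_mul f u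

variable {d : F → F} (hd : IsDerivation d)

theorem D_m (f : F) : D hd * m f = m f * D hd + m (d f) := by
  apply ext_E
  · intro u; show d (f * u) = f * d u + d f * u; rw [hd.leibniz]; ring
  · intro u; show f * (- d u) = - d (f * u) + d f * u; rw [hd.leibniz]; ring

/-- operators of order `< n` -/
def W (n : ℕ) : AddSubgroup (E F) where
  carrier := {A | ∃ a : ℕ → F, A = ∑ i ∈ Finset.range n, m (a i) * D hd ^ i}
  add_mem' := by
    rintro _ _ ⟨a, rfl⟩ ⟨b, rfl⟩
    exact ⟨fun i => a i + b i, by simp [m_add, add_mul, Finset.sum_add_distrib]⟩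
  zero_mem' := ⟨fun _ => 0, by simp [m_zero]⟩
  neg_mem' := by
    rintro _ ⟨a, rfl⟩
    exact ⟨fun i => - a i, by simp [m_neg]⟩

theorem W_mem (n : ℕ) (A : E F) :
    A ∈ W hd n ↔ ∃ a : ℕ → F, A = ∑ i ∈ Finset.range n, m (a i) * D hd ^ i := Iff.rfl

theorem W_mono {n k : ℕ} (h : n ≤ k) : W hd n ≤ W hd k := by
  rintro _ ⟨a, rfl⟩
  refine ⟨fun i => if i < n then a i else 0, ?_⟩
  rw [← Finset.sum_subset (Finset.range_mono h)]
  · apply Finset.sum_congr rfl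
    intro i hi
    simp [Finset.mem_range.1 hi]
  · intro i _ hi
    simp only [Finset.mem_range] at hi
    simp [hi, m_zero]

theorem W_mono' {n k : ℕ} (h : n < k) (f : F) : m f * D hd ^ n ∈ W hd k := by
  apply W_mono hd h
  refine ⟨fun i => if i = n then f else 0, ?_⟩
  rw [Finset.sum_eq_single n]
  · simp
  · intro i _ hi; simp [hi, m_zero]
  · simp

theorem W_ind {n : ℕ} (V : AddSubgroup (E F)) (φ : E F →+ E F)
    (h : ∀ i < n, ∀ a : F, φ (m a * D hd ^ i) ∈ V) {A : E F} (hA : A ∈ W hd n) : φ A ∈ V := by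
  obtain ⟨a, rfl⟩ := hA
  rw [map_sum]
  exact sum_mem fun i hi => h i (Finset.mem_range.1 hi) (a i)

theorem W_ml {n : ℕ} (f : F) {A : E F} (hA : A ∈ W hd n) : m f * A ∈ W hd n :=
  W_ind hd (W hd n) (AddMonoidHom.mulLeft (m f)) (fun i hi a => by
    simp only [AddMonoidHom.coe_mulLeft]
    rw [← mul_assoc, m_mul]; exact W_mono' hd hi _) hA

theorem W_Dr {n : ℕ} {A : E F} (hA : A ∈ W hd n) : A * D hd ∈ W hd (n + 1) :=
  W_ind hd (W hd (n + 1)) (AddMonoidHom.mulRight (D hd)) (fun i hi a => by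
    simp only [AddMonoidHom.mulRight_apply]
    rw [mul_assoc, ← pow_succ]; exact W_mono' hd (by omega) _) hA

theorem W_Dl {n : ℕ} {A : E F} (hA : A ∈ W hd n) : D hd * A ∈ W hd (n + 1) :=
  W_ind hd (W hd (n + 1)) (AddMonoidHom.mulLeft (D hd)) (fun i hi a => by
    simp only [AddMonoidHom.coe_mulLeft]
    rw [← mul_assoc, D_m, add_mul, mul_assoc, ← pow_succ']
    exact add_mem (W_mono' hd (by omega) _) (W_mono' hd (by omega) _)) hA

theorem Dpow_m (i : ℕ) (f : F) : D hd ^ i * m f - m f * D hd ^ i ∈ W hd i := by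
  induction i with
  | zero => simp
  | succ i ih =>
    have : D hd ^ (i + 1) * m f - m f * D hd ^ (i + 1)
        = D hd * (D hd ^ i * m f - m f * D hd ^ i) + m (d f) * D hd ^ i := by
      rw [mul_sub, ← mul_assoc (D hd) (m f), D_m, pow_succ']
      noncomm_ring
    rw [this]
    exact add_mem (W_Dl hd ih) (W_mono' hd (by omega) _)

theorem Dpow_m' {n i : ℕ} (h : i < n) (f : F) : D hd ^ i * m f ∈ W hd n := by
  have := add_mem (W_mono hd h.le (Dpow_m hd i f)) (W_mono' hd h f)
  simpa using this

theorem W_mr {n : ℕ} (f : F) {A : E F} (hA : A ∈ W hd n) : A * m f ∈ W hd n :=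
  W_ind hd (W hd n) (AddMonoidHom.mulRight (m f)) (fun i hi a => by
    simp only [AddMonoidHom.mulRight_apply]
    rw [mul_assoc]; exact W_ml hd _ (Dpow_m' hd hi _)) hA

theorem st_mon (i : ℕ) (f : F) : st (m f * D hd ^ i) = (-1) ^ i * (D hd ^ i * m f) := by
  rw [st_mul, st_pow, st_D, st_m, neg_pow, mul_assoc]

theorem W_sgn {n : ℕ} (i : ℕ) {A : E F} (hA : A ∈ W hd n) : (-1) ^ i * A ∈ W hd n := by
  rcases neg_one_pow_eq_or (E F) i with h | h <;> rw [h]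
  · simpa
  · simpa

theorem W_st {n : ℕ} {A : E F} (hA : A ∈ W hd n) : st A ∈ W hd n :=
  W_ind hd (W hd n) ⟨⟨st, st_zero⟩, st_add⟩ (fun i hi a => by
    show st _ ∈ _
    rw [st_mon]
    exact W_sgn hd _ (Dpow_m' hd hi a)) hA

/-- order exactly `n` with leading coefficient `c` -/
def Ord (n : ℕ) (c : F) (L : E F) : Prop := L - m c * D hd ^ n ∈ W hd n

theorem Ord.memW {n : ℕ} {c : F} {L : E F} (h : Ord hd n c L) : L ∈ W hd (n + 1) := by
  have := add_mem (W_mono hd (Nat.le_succ n) h) (W_mono' hd (Nat.lt_succ_self n) c)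
  simpa using this

theorem Ord.mr {n : ℕ} {c : F} {L : E F} (h : Ord hd n c L) (f : F) :
    Ord hd n (c * f) (L * m f) := by
  have h1 := add_mem (W_mr hd f h) (W_ml hd c (Dpow_m hd n f))
  unfold Ord
  convert h1 using 1
  rw [← m_mul]
  noncomm_ring

theorem m_sgn (n : ℕ) : m ((-1 : F) ^ n) = (-1) ^ n := by
  induction n with
  | zero => simpa using m_one
  | succ n ih => rw [pow_succ, ← m_mul, ih, pow_succ, m_neg, m_one]

theorem Ord.st' {n : ℕ} {c : F} {L : E F} (h : Ord hd n c L) :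
    Ord hd n ((-1) ^ n * c) (st L) := by
  have h1 := add_mem (W_st hd h) (W_sgn hd n (Dpow_m hd n c))
  unfold Ord
  convert h1 using 1
  rw [st_sub, st_mon, ← m_mul, m_sgn]
  noncomm_ring

theorem D_pow_app (i : ℕ) (u : F) : (D hd ^ i).1 u = d^[i] u := by
  induction i generalizing u with
  | zero => rfl
  | succ i ih =>
    rw [pow_succ, Function.iterate_succ_apply, ← ih]; rfl

theorem fst_sum {ι : Type*} (s : Finset ι) (f : ι → E F) (u : F) :
    (∑ i ∈ s, f i).1 u = ∑ i ∈ s, (f i).1 u := by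
  classical
  induction s using Finset.induction_on with
  | empty => rfl
  | insert a s ha ih => rw [Finset.sum_insert ha, Finset.sum_insert ha, ← ih]; rfl

theorem W_app (n : ℕ) (a : ℕ → F) (u : F) :
    (∑ i ∈ Finset.range n, m (a i) * D hd ^ i).1 u = ∑ i ∈ Finset.range n, a i * d^[i] u := by
  rw [fst_sum]
  apply Finset.sum_congr rfl
  intro i _
  rw [← D_pow_app hd]; rfl

theorem Ord.form {n : ℕ} {c : F} {L : E F} (h : Ord hd n c L) :
    ∃ a : ℕ → F, a n = c ∧ L = ∑ i ∈ Finset.range (n + 1), m (a i) * D hd ^ i := by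
  obtain ⟨a, ha⟩ := h
  refine ⟨fun i => if i = n then c else a i, by simp, ?_⟩
  rw [Finset.sum_range_succ, sub_eq_iff_eq_add.1 ha]
  simp only [if_true]
  congr 1
  apply Finset.sum_congr rfl
  intro i hi
  rw [if_neg (Finset.mem_range.1 hi).ne]

theorem ord_of_form (n : ℕ) (a : ℕ → F) :
    Ord hd n (a n) (∑ i ∈ Finset.range (n + 1), m (a i) * D hd ^ i) := by
  unfold Ord
  rw [Finset.sum_range_succ, add_sub_cancel_right]
  exact ⟨a, rfl⟩

theorem d_one (hd : IsDerivation d) : d 1 = 0 := by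
  have := hd.leibniz 1 1
  simpa using this

/-- split off the constant term -/
theorem split (n : ℕ) (a : ℕ → F) :
    ∑ i ∈ Finset.range (n + 1), m (a i) * D hd ^ i
      = (∑ i ∈ Finset.range n, m (a (i + 1)) * D hd ^ i) * D hd + m (a 0) := by
  rw [Finset.sum_range_succ', Finset.sum_mul]
  simp [pow_succ, mul_assoc]

theorem app_one (B : E F) (a : F) : (B * D hd + m a).1 1 = a := by
  show B.1 (d 1) + a * 1 = a
  rw [d_one hd, map_zero]; ring

def R (A : E F) : Prop := ∃ n, A ∈ W hd n

theorem R_split {A : E F} (hA : R hd A) : ∃ B, R hd B ∧ A = B * D hd + m (A.1 1) := by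
  obtain ⟨n, hn⟩ := hA
  obtain ⟨a, rfl⟩ := W_mono hd (Nat.le_succ n) hn
  rw [split, app_one]
  exact ⟨_, ⟨n, ⟨_, rfl⟩⟩, rfl⟩

theorem R_add {A B : E F} (hA : R hd A) (hB : R hd B) : R hd (A + B) := by
  obtain ⟨n, hn⟩ := hA
  obtain ⟨k, hk⟩ := hB
  exact ⟨max n k, add_mem (W_mono hd (le_max_left _ _) hn) (W_mono hd (le_max_right _ _) hk)⟩

theorem R_st {A : E F} (hA : R hd A) : R hd (st A) := hA.imp fun _ h => W_st hd h
theorem R_neg {A : E F} (hA : R hd A) : R hd (-A) := hA.imp fun _ h => neg_mem h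
theorem R_ml {A : E F} (f : F) (hA : R hd A) : R hd (m f * A) := hA.imp fun _ h => W_ml hd f h
theorem R_mr {A : E F} (f : F) (hA : R hd A) : R hd (A * m f) := hA.imp fun _ h => W_mr hd f h
theorem R_Dl {A : E F} (hA : R hd A) : R hd (D hd * A) := by
  obtain ⟨n, h⟩ := hA
  exact ⟨n + 1, W_Dl hd h⟩
theorem R_m (f : F) : R hd (m f) := ⟨1, by simpa using W_mono' hd (n := 0) (k := 1) (by omega) f⟩

theorem key (hlc : LinearlyClosed d) (N : ℕ) : ∀ (c : F) (L : E F), c ≠ 0 → Ord hd N c L →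
    ∀ A, R hd A → ∃ T C, st T = T ∧ R hd C ∧ A + T = C * L := by
  induction N with
  | zero =>
    intro c L hc hL A hA
    obtain ⟨a, ha, rfl⟩ := hL.form
    refine ⟨0, A * m c⁻¹, st_zero, R_mr hd _ hA, ?_⟩
    simp [ha, mul_assoc, m_mul, hc, m_one]
  | succ N ih =>
    intro c L hc hL A hA
    obtain ⟨f, hf, hLf⟩ : ∃ f : F, f ≠ 0 ∧ L.1 f = 0 := by
      obtain ⟨a, ha, rfl⟩ := hL.form
      obtain ⟨u, hu, h⟩ := (hlc (N + 1) a (ha ▸ hc)).2 (by omega)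
      exact ⟨u, hu, by rw [W_app]; exact h⟩
    -- L f = L' D
    obtain ⟨c', L', hc', hL', hLL⟩ : ∃ c' L', c' ≠ 0 ∧ Ord hd N c' L' ∧ L * m f = L' * D hd := by
      obtain ⟨a, ha, h⟩ := (hL.mr hd f).form
      have h1 : (L * m f).1 1 = 0 := by
        show L.1 (f * 1) = 0
        rw [mul_one, hLf]
      rw [split] at h
      rw [h, app_one] at h1
      refine ⟨c * f, _, mul_ne_zero hc hf, ?_, by rw [h, h1, m_zero, add_zero]⟩
      rw [← ha]
      exact ord_of_form hd N fun i => a (i + 1)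
    obtain ⟨A2, hA2, hAA⟩ := R_split hd (R_ml hd f (R_mr hd f hA))
    set a0 := (m f * (A * m f)).1 1 with ha0
    obtain ⟨g, hg⟩ : ∃ g : F, (st L').1 g = - (st A2).1 1 := by
      obtain ⟨a, ha, h⟩ := (hL'.st' hd).form
      obtain ⟨u, hu⟩ := (hlc N a (by rw [ha]; exact mul_ne_zero (by simp) hc')).1 (- (st A2).1 1)
      exact ⟨u, by rw [h, W_app]; exact hu⟩
    obtain ⟨B, hB, hY⟩ : ∃ B, R hd B ∧ A2 + m g * L' = D hd * B := by
      have hRY : R hd (A2 + m g * L') := R_add hd hA2 (R_ml hd g ⟨_, hL'.memW⟩)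
      obtain ⟨Y, hY, h⟩ := R_split hd (R_st hd hRY)
      have h0 : (st (A2 + m g * L')).1 1 = 0 := by
        show (st A2).1 1 + (st L').1 (g * 1) = 0
        rw [mul_one, hg, add_neg_cancel]
      rw [h0, m_zero, add_zero] at h
      refine ⟨- st Y, R_neg hd (R_st hd hY), ?_⟩
      rw [← st_st (A2 + m g * L'), h, st_mul, st_D]
      simp
    obtain ⟨T, C, hT, hC, hTC⟩ := ih c' L' hc' hL' B hB
    refine ⟨m f⁻¹ * (D hd * T * D hd - m a0) * m f⁻¹, m f⁻¹ * (D hd * C - m g), ?_, ?_, ?_⟩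
    · simp only [st_mul, st_sub, st_m, st_D, hT]
      noncomm_ring
    · apply R_ml
      rw [sub_eq_add_neg]
      exact R_add hd (R_Dl hd hC) (R_neg hd (R_m hd g))
    · have e1 : m f⁻¹ * m f = 1 := by rw [m_mul, inv_mul_cancel₀ hf, m_one]
      have e2 : m f * m f⁻¹ = 1 := by rw [m_mul, mul_inv_cancel₀ hf, m_one]
      have hL2 : L = L' * D hd * m f⁻¹ := by rw [← hLL, mul_assoc, e2, mul_one]
      have hA3 : A = m f⁻¹ * (A2 * D hd + m a0) * m f⁻¹ := by
        rw [← hAA]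
        calc A = (m f⁻¹ * m f) * A * (m f * m f⁻¹) := by rw [e1, e2]; simp
          _ = _ := by noncomm_ring
      have hA4 : A2 = D hd * B - m g * L' := by rw [← hY]; abel
      have hB2 : B = C * L' - T := by rw [← hTC]; abel
      rw [hA3, hL2, hA4, hB2]
      noncomm_ring

theorem op_app (n : ℕ) (a : ℕ → F) (u : F) :
    (∑ i ∈ Finset.range (n + 1), m (a i) * D hd ^ i).1 u = scalOp d n a u := W_app hd _ a u

theorem sgn_app (n : ℕ) (A : E F) (u : F) : ((-1) ^ n * A).1 u = (-1) ^ n * A.1 u := by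
  rw [← m_sgn]; rfl

theorem adj_app (n : ℕ) (a : ℕ → F) (u : F) :
    (st (∑ i ∈ Finset.range (n + 1), m (a i) * D hd ^ i)).1 u = scalOpAdj d n a u := by
  rw [st_sum, fst_sum]
  apply Finset.sum_congr rfl
  intro i _
  rw [st_mon, sgn_app, ← D_pow_app hd]
  rfl

end

end Pf

/-- Let `F` be a linearly closed differential field of characteristic zero and let
`K(u) = Σ_{n=0}^N k_n d^n u` be a nonzero scalar differential operator.  Then for every
skewadjoint scalar differential operator `S` (`S* = −S`) there exists a scalar
differential operator `P` such that `K(P(u)) − P*(K*(u)) = S(u)` for all `u ∈ F`. -/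
theorem stmt_6 (F : Type*) [Field F] [CharZero F] (d : F → F) (hd : IsDerivation d)
    (hlc : LinearlyClosed d)
    (N : ℕ) (k : ℕ → F) (hk : ∃ n ≤ N, k n ≠ 0)
    (MS : ℕ) (s : ℕ → F)
    (hskew : ∀ u : F, scalOpAdj d MS s u = - scalOp d MS s u) :
    ∃ (MP : ℕ) (p : ℕ → F), ∀ u : F,
      scalOp d N k (scalOp d MP p u) - scalOpAdj d MP p (scalOpAdj d N k u)
        = scalOp d MS s u := by
  obtain ⟨n₀, hn₀, hk₀⟩ := hk
  -- the true order of K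
  set K : Pf.E F := ∑ i ∈ Finset.range (N + 1), Pf.m (k i) * Pf.D hd ^ i with hK
  set S : Pf.E F := ∑ i ∈ Finset.range (MS + 1), Pf.m (s i) * Pf.D hd ^ i with hS
  have hord : ∃ n c, c ≠ 0 ∧ Pf.Ord hd n c K := by
    rw [hK]
    clear hK K
    induction N with
    | zero =>
      obtain rfl : n₀ = 0 := by omega
      exact ⟨0, k 0, hk₀, Pf.ord_of_form hd 0 k⟩
    | succ N ih =>
      by_cases h : k (N + 1) = 0
      · rw [Finset.sum_range_succ, h, Pf.m_zero, zero_mul, add_zero]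
        apply ih
        rcases Nat.lt_or_ge N n₀ with h1 | h1
        · obtain rfl : n₀ = N + 1 := by omega
          exact absurd h hk₀
        · exact h1
      · exact ⟨N + 1, _, h, Pf.ord_of_form hd (N + 1) k⟩
  obtain ⟨n, c, hc, hO⟩ := hord
  have hSR : Pf.R hd S := ⟨_, s, rfl⟩
  obtain ⟨T, C, hT, ⟨MP, hC⟩, hTC⟩ := Pf.key hd hlc n _ _ (mul_ne_zero (by simp) hc) (hO.st' hd)
    (Pf.m (-(1 / 2)) * S) (Pf.R_ml hd _ hSR)
  obtain ⟨p, hp⟩ := Pf.W_mono hd (Nat.le_succ MP) (Pf.W_st hd hC)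
  refine ⟨MP, p, fun u => ?_⟩
  have hTC2 := congrArg Pf.st hTC
  simp only [Pf.st_add, Pf.st_mul, Pf.st_m, Pf.st_st, hT] at hTC2
  have h1 : -(1 / 2) * S.1 u + T.1 u = C.1 ((Pf.st K).1 u) :=
    congrArg (fun A : Pf.E F => A.1 u) hTC
  have h2 : (Pf.st S).1 (-(1 / 2) * u) + T.1 u = K.1 ((Pf.st C).1 u) :=
    congrArg (fun A : Pf.E F => A.1 u) hTC2
  have h3 : (Pf.st S).1 (-(1 / 2) * u) = - S.1 (-(1 / 2) * u) := by
    rw [hS, Pf.adj_app, Pf.op_app, hskew]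
  have h4 : S.1 (-(1 / 2) * u) + S.1 (-(1 / 2) * u) = - S.1 u := by
    rw [← map_add, ← map_neg]
    congr 1
    ring
  rw [← Pf.op_app hd N k, ← Pf.op_app hd MP p, ← Pf.adj_app hd MP p, ← Pf.adj_app hd N k,
    ← Pf.op_app hd MS s, ← hK, ← hS, ← hp, Pf.st_st, ← h1, ← h2, h3]
  have h5 : S.1 (-(1 / 2) * u) = -(1 / 2) * S.1 u := by
    linear_combination (1 / 2) * h4
  rw [h5]
  ring
end

section
/- Let F be a linearly closed differential field of characteristic zero with constants C = {c ∈ F : ∂c = 0}, and let K(u) = Σ_{n=0}^N k_n ∂^n u be a scalar differential operator over F of order N, i.e., k_N ≠ 0. Then the set of coefficient tuples (p_0,…,p_{N−1}) ∈ F^N such that the scalar differential operator P(u) = Σ_{n=0}^{N−1} p_n ∂^n u (of order at most N−1) makes K∘P selfadjoint, i.e., K(P(u)) = P*(K*(u)) for all u ∈ F, is a C-vector subspace of F^N of dimension binom(N, 2). -/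
universe v

/-- Abstract ring of scalar differential operators with formal adjoint. -/
structure DOps (C F R : Type v) [Field C] [Field F] [Algebra C F] [Ring R] [Algebra C R] where
  d : F →ₗ[C] F
  μ : F →ₐ[C] R
  δ : R
  σ : R →ₗ[C] R
  ρ : R →ₐ[C] Module.End C F
  comm : ∀ a, δ * μ a = μ a * δ + μ (d a)
  σσ : ∀ x, σ (σ x) = x
  σmul : ∀ x y, σ (x * y) = σ y * σ x
  σμ : ∀ a, σ (μ a) = μ a
  σδ : σ δ = -δ
  ρμ : ∀ a f, ρ (μ a) f = a * f
  ρδ : ∀ f, ρ δ f = d f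
  closed : ∀ (M : ℕ) (a : ℕ → F), a M ≠ 0 →
    (∀ b : F, ∃ u : F, ∑ n ∈ Finset.range (M + 1), a n * (d ^ n) u = b) ∧
    (1 ≤ M → ∃ u : F, u ≠ 0 ∧ ∑ n ∈ Finset.range (M + 1), a n * (d ^ n) u = 0)
  const : ∀ f, d f = 0 → ∃ c : C, algebraMap C F c = f

theorem rank_sub_aux {C M M1 M2 : Type v} [Field C] [AddCommGroup M] [AddCommGroup M1]
    [AddCommGroup M2] [Module C M] [Module C M1] [Module C M2]
    (p : Submodule C M) (q : Submodule C M1) (r : Submodule C M2)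
    (i : M →ₗ[C] M1) (π : M1 →ₗ[C] M2) (hi : ∀ x ∈ p, i x ∈ q)
    (hinj : ∀ x ∈ p, i x = 0 → x = 0) (hπ : ∀ y ∈ q, π y ∈ r)
    (hsurj : ∀ z ∈ r, ∃ y ∈ q, π y = z)
    (hz : ∀ x ∈ p, π (i x) = 0)
    (hex : ∀ y ∈ q, π y = 0 → ∃ x ∈ p, i x = y) :
    Module.rank C q = Module.rank C r + Module.rank C p := by
  let f : q →ₗ[C] r := π.restrict hπ
  have hf : Function.Surjective f := by
    rintro ⟨z, hzr⟩
    obtain ⟨y, hy, rfl⟩ := hsurj z hzr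
    exact ⟨⟨y, hy⟩, rfl⟩
  rw [LinearMap.rank_eq_of_surjective hf]
  congr 1
  let g : p →ₗ[C] LinearMap.ker f := (i.restrict hi).codRestrict _ (by
    rintro ⟨x, hx⟩
    exact Subtype.ext (hz x hx))
  refine (LinearEquiv.ofBijective g ⟨?_, ?_⟩).rank_eq.symm
  · rw [← LinearMap.ker_eq_bot, LinearMap.ker_eq_bot']
    rintro ⟨x, hx⟩ h
    have : i x = 0 := congrArg (fun t => ((t : LinearMap.ker f) : q).1) h
    exact Subtype.ext (hinj x hx this)
  · rintro ⟨⟨y, hy⟩, h⟩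
    have h' : π y = 0 := congrArg Subtype.val h
    obtain ⟨x, hx, rfl⟩ := hex y hy h'
    exact ⟨⟨x, hx⟩, rfl⟩

namespace DOps

variable {C F R : Type v} [Field C] [Field F] [Algebra C F] [Ring R] [Algebra C R]
  (D : DOps C F R)

/-- Operators of order less than `n`. -/
noncomputable def H : ℕ → Submodule C R
  | 0 => ⊥
  | n + 1 => (H n).map (LinearMap.mulRight C D.δ) ⊔ LinearMap.range D.μ.toLinearMap

theorem mem_zero {A : R} : A ∈ D.H 0 ↔ A = 0 := by simp [H]

theorem mem_succ {n : ℕ} {A : R} :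
    A ∈ D.H (n + 1) ↔ ∃ B ∈ D.H n, ∃ f, A = B * D.δ + D.μ f := by
  simp only [H, Submodule.mem_sup, Submodule.mem_map, LinearMap.mem_range]
  constructor
  · rintro ⟨_, ⟨B, hB, rfl⟩, _, ⟨f, rfl⟩, rfl⟩
    exact ⟨B, hB, f, rfl⟩
  · rintro ⟨B, hB, f, rfl⟩
    exact ⟨_, ⟨B, hB, rfl⟩, _, ⟨f, rfl⟩, rfl⟩

theorem mk_mem {n : ℕ} {B : R} (hB : B ∈ D.H n) (f : F) : B * D.δ + D.μ f ∈ D.H (n + 1) :=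
  D.mem_succ.2 ⟨B, hB, f, rfl⟩

theorem μ_mem (n : ℕ) (f : F) : D.μ f ∈ D.H (n + 1) := by
  simpa using D.mk_mem (Submodule.zero_mem (D.H n)) f

theorem mulδ_mem {n : ℕ} {B : R} (hB : B ∈ D.H n) : B * D.δ ∈ D.H (n + 1) := by
  simpa using D.mk_mem hB 0

theorem H_le_succ (n : ℕ) : D.H n ≤ D.H (n + 1) := by
  induction n with
  | zero => simp [H]
  | succ n ih =>
    intro A hA
    obtain ⟨B, hB, f, rfl⟩ := D.mem_succ.1 hA
    exact D.mk_mem (ih hB) f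

theorem H_mono : Monotone D.H := monotone_nat_of_le_succ D.H_le_succ

theorem μmul_mem {n : ℕ} (a : F) {A : R} (hA : A ∈ D.H n) : D.μ a * A ∈ D.H n := by
  induction n generalizing A with
  | zero => rw [D.mem_zero] at *; simp [hA]
  | succ n ih =>
    obtain ⟨B, hB, f, rfl⟩ := D.mem_succ.1 hA
    have := D.mk_mem (ih hB) (a * f)
    rwa [map_mul, mul_assoc, ← mul_add] at this

theorem mulμ_mem {n : ℕ} (a : F) {A : R} (hA : A ∈ D.H n) : A * D.μ a ∈ D.H n := by
  induction n generalizing A a with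
  | zero => rw [D.mem_zero] at *; simp [hA]
  | succ n ih =>
    obtain ⟨B, hB, f, rfl⟩ := D.mem_succ.1 hA
    have h := Submodule.add_mem _ (D.mk_mem (ih a hB) (f * a)) (D.H_le_succ _ (ih (D.d a) hB))
    have e : (B * D.δ + D.μ f) * D.μ a
        = B * D.μ a * D.δ + D.μ (f * a) + B * D.μ (D.d a) := by
      rw [add_mul, mul_assoc, D.comm, map_mul]; noncomm_ring
    rwa [e]

theorem δmul_mem {n : ℕ} {A : R} (hA : A ∈ D.H n) : D.δ * A ∈ D.H (n + 1) := by
  induction n generalizing A with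
  | zero => rw [D.mem_zero] at hA; simp [hA]
  | succ n ih =>
    obtain ⟨B, hB, f, rfl⟩ := D.mem_succ.1 hA
    have h := D.mk_mem (Submodule.add_mem _ (ih hB) (D.μ_mem n f)) (D.d f)
    have e : D.δ * (B * D.δ + D.μ f) = (D.δ * B + D.μ f) * D.δ + D.μ (D.d f) := by
      rw [mul_add, D.comm]; noncomm_ring
    rwa [e]

theorem mul_mem {m n : ℕ} {A B : R} (hA : A ∈ D.H m) (hB : B ∈ D.H n) :
    A * B ∈ D.H (m + n) := by
  induction n generalizing B with
  | zero => rw [D.mem_zero] at hB; simp [hB]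
  | succ n ih =>
    obtain ⟨B', hB', f, rfl⟩ := D.mem_succ.1 hB
    rw [mul_add, ← mul_assoc]
    exact Submodule.add_mem _ (D.mulδ_mem (ih hB')) (D.H_mono (by omega) (D.mulμ_mem f hA))

theorem σ_mem {n : ℕ} {A : R} (hA : A ∈ D.H n) : D.σ A ∈ D.H n := by
  induction n generalizing A with
  | zero => rw [D.mem_zero] at *; simp [hA]
  | succ n ih =>
    obtain ⟨B, hB, f, rfl⟩ := D.mem_succ.1 hA
    rw [map_add, D.σmul, D.σμ, D.σδ, neg_mul]
    exact Submodule.add_mem _ (Submodule.neg_mem _ (D.δmul_mem (ih hB))) (D.μ_mem n f)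

theorem σ_mem_iff {n : ℕ} {A : R} : D.σ A ∈ D.H n ↔ A ∈ D.H n :=
  ⟨fun h => by simpa [D.σσ] using D.σ_mem h, D.σ_mem⟩

theorem sum_mem_H (n : ℕ) (a : ℕ → F) : ∑ i ∈ Finset.range n, D.μ (a i) * D.δ ^ i ∈ D.H n := by
  induction n generalizing a with
  | zero => simp
  | succ n ih =>
    rw [Finset.sum_range_succ']
    have := D.mk_mem (ih (fun i => a (i + 1))) (a 0)
    simpa [Finset.sum_mul, mul_assoc, pow_succ] using this

theorem exists_coeff {n : ℕ} {A : R} (hA : A ∈ D.H n) :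
    ∃ a : ℕ → F, A = ∑ i ∈ Finset.range n, D.μ (a i) * D.δ ^ i := by
  induction n generalizing A with
  | zero => rw [D.mem_zero] at hA; exact ⟨0, by simp [hA]⟩
  | succ n ih =>
    obtain ⟨B, hB, f, rfl⟩ := D.mem_succ.1 hA
    obtain ⟨a, rfl⟩ := ih hB
    refine ⟨fun i => Nat.casesOn i f a, ?_⟩
    rw [Finset.sum_range_succ']
    simp [Finset.sum_mul, mul_assoc, pow_succ]

theorem ρδ' : D.ρ D.δ = D.d := LinearMap.ext D.ρδ

theorem ρ_sum (n : ℕ) (a : ℕ → F) (f : F) :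
    D.ρ (∑ i ∈ Finset.range n, D.μ (a i) * D.δ ^ i) f
      = ∑ i ∈ Finset.range n, a i * (D.d ^ i) f := by
  simp [map_sum, LinearMap.sum_apply, D.ρμ, D.ρδ']

theorem exact_coeff {n : ℕ} {A : R} (hA : A ∈ D.H (n + 1)) (hA' : A ∉ D.H n) :
    ∃ a : ℕ → F, a n ≠ 0 ∧ A = ∑ i ∈ Finset.range (n + 1), D.μ (a i) * D.δ ^ i := by
  obtain ⟨a, rfl⟩ := D.exists_coeff hA
  refine ⟨a, fun h => hA' ?_, rfl⟩
  rw [Finset.sum_range_succ, h]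
  simpa using D.sum_mem_H n a

theorem surj {n : ℕ} {A : R} (hA : A ∈ D.H (n + 1)) (hA' : A ∉ D.H n) (b : F) :
    ∃ u, D.ρ A u = b := by
  obtain ⟨a, ha, rfl⟩ := D.exact_coeff hA hA'
  obtain ⟨u, hu⟩ := (D.closed n a ha).1 b
  exact ⟨u, by rw [D.ρ_sum, hu]⟩

theorem exists_ker {n : ℕ} {A : R} (hA : A ∈ D.H (n + 2)) (hA' : A ∉ D.H (n + 1)) :
    ∃ u, u ≠ 0 ∧ D.ρ A u = 0 := by
  obtain ⟨a, ha, rfl⟩ := D.exact_coeff hA hA'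
  obtain ⟨u, h0, hu⟩ := (D.closed (n + 1) a ha).2 (by omega)
  exact ⟨u, h0, by rw [D.ρ_sum, hu]⟩

theorem ρ_inj {n : ℕ} {A : R} (hA : A ∈ D.H n) (h : D.ρ A = 0) : A = 0 := by
  induction n with
  | zero => exact D.mem_zero.1 hA
  | succ n ih =>
    by_cases hA' : A ∈ D.H n
    · exact ih hA'
    · obtain ⟨u, hu⟩ := D.surj hA hA' 1
      simp [h] at hu

theorem d_one : D.d 1 = 0 := by
  have h := D.comm 1
  simp only [map_one, mul_one, one_mul] at h
  have h2 : D.μ (D.d 1) = 0 := by simpa using h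
  have := D.ρμ (D.d 1) 1
  rw [h2] at this
  simpa using this.symm

theorem d_surj (b : F) : ∃ u, D.d u = b := by
  obtain ⟨u, hu⟩ := (D.closed 1 (fun i => if i = 1 then 1 else 0) (by simp)).1 b
  exact ⟨u, by simpa [Finset.sum_range_succ] using hu⟩

theorem ρ_mk_one (B : R) (f : F) : D.ρ (B * D.δ + D.μ f) 1 = f := by
  simp [D.ρμ, D.ρδ, D.d_one]

theorem right_unique {n : ℕ} {B : R} (hB : B ∈ D.H n) {f : F} (h : B * D.δ + D.μ f = 0) :
    B = 0 ∧ f = 0 := by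
  have hf : f = 0 := by rw [← D.ρ_mk_one B f, h]; simp
  refine ⟨D.ρ_inj hB ?_, hf⟩
  ext u
  obtain ⟨t, rfl⟩ := D.d_surj u
  have := congrArg (fun X => D.ρ X t) h
  simpa [hf, D.ρδ] using this

theorem left_unique {n : ℕ} {B : R} (hB : B ∈ D.H n) {f : F} (h : D.δ * B + D.μ f = 0) :
    B = 0 ∧ f = 0 := by
  have h2 := congrArg D.σ h
  rw [map_add, D.σmul, D.σμ, D.σδ, map_zero, mul_neg, ← neg_mul] at h2
  have h3 := D.right_unique (Submodule.neg_mem _ (D.σ_mem hB)) h2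
  refine ⟨?_, h3.2⟩
  rw [← D.σσ B, neg_eq_zero.1 h3.1, map_zero]

theorem left_div {n : ℕ} {A : R} (hA : A ∈ D.H (n + 1)) :
    ∃ B ∈ D.H n, ∃ f, A = D.δ * B + D.μ f := by
  obtain ⟨B, hB, f, h⟩ := D.mem_succ.1 (D.σ_mem hA)
  refine ⟨-D.σ B, Submodule.neg_mem _ (D.σ_mem hB), f, ?_⟩
  rw [← D.σσ A, h, map_add, D.σmul, D.σμ, D.σδ]; noncomm_ring

/-- decomposition of `K μ f` -/
theorem Kμ {n : ℕ} {K : R} (hK : K ∈ D.H (n + 1)) (f : F) :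
    ∃ X ∈ D.H n, K * D.μ f = X * D.δ + D.μ (D.ρ K f) := by
  obtain ⟨X, hX, g, h⟩ := D.mem_succ.1 (D.mulμ_mem f hK)
  refine ⟨X, hX, ?_⟩
  have : D.ρ (K * D.μ f) 1 = g := by rw [h, D.ρ_mk_one]
  have h2 : D.ρ K f = g := by rw [← this]; simp [D.ρμ]
  rw [h2, h]

theorem μ_inv_mul {w : F} (hw : w ≠ 0) (x : R) : D.μ w⁻¹ * (D.μ w * x) = x := by
  rw [← mul_assoc, ← map_mul, inv_mul_cancel₀ hw, map_one, one_mul]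

theorem μ_mul_inv {w : F} (hw : w ≠ 0) (x : R) : D.μ w * (D.μ w⁻¹ * x) = x := by
  rw [← mul_assoc, ← map_mul, mul_inv_cancel₀ hw, map_one, one_mul]

theorem mul_μ_inv {w : F} (hw : w ≠ 0) : D.μ w * D.μ w⁻¹ = 1 := by
  rw [← map_mul, mul_inv_cancel₀ hw, map_one]

theorem inv_mul_μ {w : F} (hw : w ≠ 0) : D.μ w⁻¹ * D.μ w = 1 := by
  rw [← map_mul, inv_mul_cancel₀ hw, map_one]

theorem factor {n : ℕ} {K : R} (hK : K ∈ D.H (n + 2)) (hK' : K ∉ D.H (n + 1)) :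
    ∃ w : F, w ≠ 0 ∧ ∃ L, L ∈ D.H (n + 1) ∧ L ∉ D.H n ∧ D.μ w * K = D.δ * L := by
  obtain ⟨w, hw, h⟩ := D.exists_ker (D.σ_mem hK) (fun h => hK' (D.σ_mem_iff.1 h))
  obtain ⟨X, hX, e⟩ := D.Kμ (D.σ_mem hK) w
  have e2 : D.μ w * K = D.δ * (-D.σ X) := by
    have := congrArg D.σ e
    rw [h, D.σmul, D.σμ, D.σσ, map_zero, add_zero, D.σmul, D.σδ] at this
    rw [this]; noncomm_ring
  refine ⟨w, hw, -D.σ X, Submodule.neg_mem _ (D.σ_mem hX), fun hm => hK' ?_, e2⟩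
  rw [← D.μ_inv_mul hw K, e2]
  exact D.μmul_mem _ (D.δmul_mem hm)

theorem rank_ker_d : Module.rank C (LinearMap.ker D.d) = 1 := by
  refine rank_eq_one (⟨1, D.d_one⟩ : LinearMap.ker D.d) (fun h => one_ne_zero
    (congrArg Subtype.val h)) ?_
  rintro ⟨w, hw⟩
  obtain ⟨c, hc⟩ := D.const w hw
  exact ⟨c, Subtype.ext (by simp [← hc, Algebra.smul_def])⟩

theorem rank_ker {n : ℕ} {K : R} (hK : K ∈ D.H (n + 1)) (hK' : K ∉ D.H n) :
    Module.rank C (LinearMap.ker (D.ρ K)) = n := by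
  induction n generalizing K with
  | zero =>
    obtain ⟨B, hB, f, rfl⟩ := D.mem_succ.1 hK
    rw [D.mem_zero] at hB
    subst hB
    have hf : f ≠ 0 := by rintro rfl; exact hK' (by simp)
    have : LinearMap.ker (D.ρ (0 * D.δ + D.μ f)) = ⊥ := by
      rw [LinearMap.ker_eq_bot']
      intro u hu
      simpa [D.ρμ, hf] using hu
    rw [this]; simp
  | succ n ih =>
    obtain ⟨w, hw, L, hL, hL', e⟩ := D.factor hK hK'
    have e2 : ∀ u, w * D.ρ K u = D.d (D.ρ L u) := by
      intro u
      have := congrArg (fun X => D.ρ X u) e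
      simpa [D.ρμ, D.ρδ] using this
    rw [rank_sub_aux (LinearMap.ker (D.ρ L)) (LinearMap.ker (D.ρ K)) (LinearMap.ker D.d)
      LinearMap.id (D.ρ L), ih hL hL', D.rank_ker_d]
    · push_cast; ring
    · intro x hx
      have := e2 x
      rw [LinearMap.mem_ker] at *
      simpa [hx, hw] using this
    · intro x _ h; exact h
    · intro y hy
      have := e2 y
      rw [LinearMap.mem_ker] at *
      rw [← this, hy, mul_zero]
    · intro z hz
      obtain ⟨u, hu⟩ := D.surj hL hL' z
      refine ⟨u, ?_, hu⟩
      have := e2 u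
      rw [LinearMap.mem_ker] at *
      simpa [hu, hz, hw] using this
    · intro x hx; exact hx
    · intro y _ h; exact ⟨y, h, rfl⟩

variable [CharZero F]

theorem skew_decomp {n : ℕ} {A : R} (hA : A ∈ D.H (n + 2)) (hs : D.σ A = -A) :
    ∃ U ∈ D.H n, ∃ h, D.σ U = -U ∧
      A = D.δ * U * D.δ + D.δ * D.μ h + D.μ h * D.δ := by
  obtain ⟨T, hT, g, rfl⟩ := D.left_div hA
  obtain ⟨U, hU, h, rfl⟩ := D.mem_succ.1 hT
  have e : (D.δ * (U + D.σ U)) * D.δ + D.μ (D.d h + 2 * g) = 0 := by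
    simp only [map_add, D.σmul, D.σμ, D.σδ] at hs
    have h2 := D.comm h
    have h3 : D.μ (D.d h) = D.δ * D.μ h - D.μ h * D.δ := by rw [h2]; noncomm_ring
    rw [map_add, h3, two_mul, map_add]
    rw [← sub_eq_zero] at hs
    rw [← hs]; noncomm_ring
  obtain ⟨e1, e2⟩ := D.right_unique (D.δmul_mem (Submodule.add_mem _ hU (D.σ_mem hU))) e
  obtain ⟨e3, -⟩ := D.left_unique (f := 0) (Submodule.add_mem _ hU (D.σ_mem hU))
    (by simpa using e1)
  refine ⟨U, hU, h / 2, eq_neg_of_add_eq_zero_right e3, ?_⟩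
  have hh : h = h / 2 + h / 2 := by ring
  have hg : g = - D.d (h / 2) := by
    have : D.d h = D.d (h / 2) + D.d (h / 2) := by rw [← map_add, ← hh]
    rw [this] at e2
    have h4 : (2 : F) * (g + D.d (h / 2)) = 0 := by rw [← e2]; ring
    have h5 := (mul_eq_zero.1 h4).resolve_left two_ne_zero
    exact eq_neg_of_add_eq_zero_left h5
  have h6 : D.μ h = D.μ (h / 2) + D.μ (h / 2) := by rw [← map_add, ← hh]
  rw [hg, h6, map_neg, mul_add, mul_add, D.comm]
  noncomm_ring

/-- skew part of `δ L (Q δ + μ f)` -/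
theorem skew_part {L X Q : R} {f h : F} (e : L * D.μ f = X * D.δ + D.μ h) :
    D.δ * L * (Q * D.δ + D.μ f) - D.σ (D.δ * L * (Q * D.δ + D.μ f))
      = D.δ * ((L * Q + X) - D.σ (L * Q + X)) * D.δ + D.δ * D.μ h + D.μ h * D.δ := by
  have e1 : D.δ * L * (Q * D.δ + D.μ f) = D.δ * (L * Q + X) * D.δ + D.δ * D.μ h := by
    rw [mul_add, mul_assoc D.δ L (D.μ f), e]; noncomm_ring
  rw [e1]
  generalize L * Q + X = Z
  simp only [map_add, D.σmul, D.σμ, D.σδ]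
  noncomm_ring

theorem skew_zero {n : ℕ} {Z : R} (hZ : Z ∈ D.H n) {h : F}
    (e : D.δ * (Z - D.σ Z) * D.δ + D.δ * D.μ h + D.μ h * D.δ = 0) :
    h = 0 ∧ D.σ Z = Z := by
  have hm : Z - D.σ Z ∈ D.H n := Submodule.sub_mem _ hZ (D.σ_mem hZ)
  have e1 : (D.δ * (Z - D.σ Z) + D.μ (2 * h)) * D.δ + D.μ (D.d h) = 0 := by
    rw [← e, D.comm, two_mul, map_add]; noncomm_ring
  obtain ⟨e2, -⟩ := D.right_unique (Submodule.add_mem _ (D.δmul_mem hm) (D.μ_mem n _)) e1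
  obtain ⟨e3, e4⟩ := D.left_unique hm e2
  exact ⟨by simpa using e4, (sub_eq_zero.1 e3).symm⟩

theorem skew_surj {n : ℕ} {K : R} (hK : K ∈ D.H (n + 1)) (hK' : K ∉ D.H n)
    {A : R} (hA : A ∈ D.H (2 * n)) (hs : D.σ A = -A) :
    ∃ Q ∈ D.H n, K * Q - D.σ (K * Q) = A := by
  induction n generalizing K A with
  | zero =>
    rw [mul_zero, D.mem_zero] at hA
    exact ⟨0, Submodule.zero_mem _, by simp [hA]⟩
  | succ n ih =>
    obtain ⟨w, hw, L, hL, hL', e⟩ := D.factor hK hK'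
    have hA1 : D.μ w * A * D.μ w ∈ D.H (2 * n + 2) := D.mulμ_mem _ (D.μmul_mem _ hA)
    obtain ⟨U, hU, h, hUs, eU⟩ := D.skew_decomp hA1 (by
      rw [D.σmul, D.σmul, D.σμ, hs]; noncomm_ring)
    obtain ⟨f, hf⟩ := D.surj hL hL' h
    obtain ⟨X, hX, eX⟩ := D.Kμ hL f
    rw [hf] at eX
    have hX2 : X ∈ D.H (2 * n) := D.H_mono (by omega) hX
    obtain ⟨Q, hQ, eQ⟩ := ih hL hL' (A := U - (X - D.σ X))
      (Submodule.sub_mem _ hU (Submodule.sub_mem _ hX2 (D.σ_mem hX2))) (by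
        rw [map_sub, map_sub, D.σσ, hUs]; abel)
    have e1 := D.skew_part (Q := Q) eX
    have e2 : (L * Q + X) - D.σ (L * Q + X) = U := by
      rw [map_add, add_sub_add_comm, eQ]; abel
    rw [e2, ← eU, ← e] at e1
    refine ⟨(Q * D.δ + D.μ f) * D.μ w⁻¹, D.mulμ_mem _ (D.mk_mem hQ f), ?_⟩
    generalize Q * D.δ + D.μ f = Y at e1
    have e3 := congrArg (fun Z => D.μ w⁻¹ * Z * D.μ w⁻¹) e1
    simp only [D.σmul, D.σμ, mul_sub, sub_mul, mul_assoc, D.μ_inv_mul hw, D.mul_μ_inv hw,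
      mul_one] at e3
    simpa only [D.σmul, D.σμ, mul_assoc] using e3

/-- The space of `Q` of order `< n` with `K Q` selfadjoint. -/
noncomputable def Sol (K : R) (n : ℕ) : Submodule C R :=
  D.H n ⊓ LinearMap.ker ((D.σ - LinearMap.id) ∘ₗ LinearMap.mulLeft C K)


theorem mem_Sol {K : R} {n : ℕ} {Q : R} :
    Q ∈ D.Sol K n ↔ Q ∈ D.H n ∧ D.σ (K * Q) = K * Q := by
  simp [Sol, sub_eq_zero]


theorem self_conj {w : F} (hw : w ≠ 0) {K L Q : R} (e : D.μ w * K = D.δ * L) :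
    D.σ (K * Q) = K * Q ↔
      D.δ * L * (Q * D.μ w) - D.σ (D.δ * L * (Q * D.μ w)) = 0 := by
  rw [← e]
  constructor
  · intro h
    have : D.μ w * K * (Q * D.μ w) = D.μ w * (K * Q) * D.μ w := by noncomm_ring
    rw [this, D.σmul, D.σmul, h, D.σμ]; noncomm_ring
  · intro h
    have e3 := congrArg (fun Z => D.μ w⁻¹ * Z * D.μ w⁻¹) h
    simp only [D.σmul, D.σμ, mul_sub, sub_mul, mul_assoc, D.μ_inv_mul hw, D.mul_μ_inv hw,
      mul_one, mul_zero, zero_mul] at e3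
    rw [D.σmul]
    exact (sub_eq_zero.1 e3).symm

theorem rank_Sol {n : ℕ} {K : R} (hK : K ∈ D.H (n + 1)) (hK' : K ∉ D.H n) :
    Module.rank C (D.Sol K n) = (n.choose 2 : ℕ) := by
  induction n generalizing K with
  | zero =>
    have : D.Sol K 0 = ⊥ := by
      rw [eq_bot_iff]; intro x hx; exact (D.mem_Sol.1 hx).1
    rw [this]; simp
  | succ n ih =>
    obtain ⟨w, hw, L, hL, hL', e⟩ := D.factor hK hK'
    have key : ∀ Q ∈ D.H n, ∀ f X, X ∈ D.H n → L * D.μ f = X * D.δ + D.μ (D.ρ L f) →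
        ∀ Y, Y * D.μ w = Q * D.δ + D.μ f → D.σ (K * Y) = K * Y →
        D.ρ L f = 0 ∧ D.σ (L * Q + X) = L * Q + X := by
      intro Q hQ f X hX eX Y eY hY
      rw [D.self_conj hw e, eY, D.skew_part eX] at hY
      exact D.skew_zero (n := (n + 1) + n) (Submodule.add_mem _ (D.mul_mem hL hQ)
        (D.H_mono (by omega) hX)) hY
    have ρw : ∀ Y Q f, Y * D.μ w = Q * D.δ + D.μ f → D.ρ Y w = f := by
      intro Y Q f eY
      have := congrArg (fun Z => D.ρ Z 1) eY
      rw [D.ρ_mk_one] at this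
      simpa [D.ρμ] using this
    rw [rank_sub_aux (D.Sol L n) (D.Sol K (n + 1)) (LinearMap.ker (D.ρ L))
      (LinearMap.mulRight C (D.δ * D.μ w⁻¹))
      ((LinearMap.applyₗ w) ∘ₗ D.ρ.toLinearMap), ih hL hL', D.rank_ker hL hL']
    · rw [Nat.choose_succ_succ' n 1, Nat.choose_one_right]; push_cast; rfl
    · intro Q hQ
      obtain ⟨hQ, hs⟩ := D.mem_Sol.1 hQ
      rw [LinearMap.mulRight_apply, ← mul_assoc]
      refine D.mem_Sol.2 ⟨D.mulμ_mem _ (D.mulδ_mem hQ), ?_⟩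
      rw [D.self_conj hw e]
      have : Q * D.δ * D.μ w⁻¹ * D.μ w = Q * D.δ + D.μ 0 := by
        rw [mul_assoc, D.inv_mul_μ hw]; simp
      rw [this, D.skew_part (X := 0) (h := 0) (by simp)]
      simp [hs]
    · intro Q hQ h
      rw [LinearMap.mulRight_apply] at h
      have h2 : Q * D.δ + D.μ 0 = 0 := by
        have := congrArg (fun Z => Z * D.μ w) h
        simpa [mul_assoc, D.inv_mul_μ hw] using this
      exact (D.right_unique (D.mem_Sol.1 hQ).1 h2).1
    · intro Y hY
      obtain ⟨hY, hs⟩ := D.mem_Sol.1 hY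
      obtain ⟨Q, hQ, f, eY⟩ := D.mem_succ.1 (D.mulμ_mem w hY)
      obtain ⟨X, hX, eX⟩ := D.Kμ hL f
      have := (key Q hQ f X hX eX Y eY hs).1
      rw [LinearMap.mem_ker]
      change D.ρ L (D.ρ Y w) = 0
      rw [ρw Y Q f eY, this]
    · intro f hf
      rw [LinearMap.mem_ker] at hf
      obtain ⟨X, hX, eX⟩ := D.Kμ hL f
      rw [hf] at eX
      have hX2 : X ∈ D.H (2 * n) := D.H_mono (by omega) hX
      obtain ⟨Q, hQ, eQ⟩ := D.skew_surj hL hL' (A := - (X - D.σ X))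
        (Submodule.neg_mem _ (Submodule.sub_mem _ hX2 (D.σ_mem hX2))) (by
          rw [map_neg, map_sub, D.σσ]; abel)
      have eY : (Q * D.δ + D.μ f) * D.μ w⁻¹ * D.μ w = Q * D.δ + D.μ f := by
        rw [mul_assoc, D.inv_mul_μ hw, mul_one]
      refine ⟨(Q * D.δ + D.μ f) * D.μ w⁻¹, D.mem_Sol.2 ⟨D.mulμ_mem _ (D.mk_mem hQ f), ?_⟩,
        ρw _ Q f eY⟩
      rw [D.self_conj hw e, eY, D.skew_part eX]
      have e2 : (L * Q + X) - D.σ (L * Q + X) = 0 := by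
        rw [map_add, add_sub_add_comm, eQ]; abel
      rw [e2]; simp
    · intro Q _
      change D.ρ (Q * (D.δ * D.μ w⁻¹)) w = 0
      simp [D.ρμ, D.ρδ, hw, D.d_one]
    · intro Y hY h0
      obtain ⟨hY, hs⟩ := D.mem_Sol.1 hY
      obtain ⟨Q, hQ, f, eY⟩ := D.mem_succ.1 (D.mulμ_mem w hY)
      have hf : f = 0 := by rw [← ρw Y Q f eY]; exact h0
      subst hf
      have := (key Q hQ 0 0 (Submodule.zero_mem _) (by simp) Y eY hs).2
      refine ⟨Q, D.mem_Sol.2 ⟨hQ, by simpa using this⟩, ?_⟩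
      rw [LinearMap.mulRight_apply, ← mul_assoc]
      have e5 : Q * D.δ = Y * D.μ w := by simpa using eY.symm
      rw [e5, mul_assoc, D.mul_μ_inv hw, mul_one]

end DOps

/-- The ring of pairs (operator, candidate adjoint) built from a linearly closed field. -/
noncomputable def mkDOps {F : Type v} [Field F] (d : F → F) (hd : IsDerivation d)
    (hlc : LinearlyClosed d) (C : Subfield F) (hC : ∀ x : F, x ∈ C ↔ d x = 0) :
    DOps C F (Module.End C F × (Module.End C F)ᵐᵒᵖ) :=
  let dl : F →ₗ[C] F :=
    { toFun := d
      map_add' := hd.map_add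
      map_smul' := by
        rintro ⟨c, hc⟩ x
        change d (c * x) = c * d x
        rw [hd.leibniz, (hC c).1 hc]; ring }
  have hpow : ∀ (n : ℕ) (u : F), (dl ^ n) u = d^[n] u := by
    intro n u
    rw [Module.End.pow_apply]; rfl
  { d := dl
    μ := (Algebra.lmul C F).prod ((Algebra.lmul C F).toOpposite (fun x y => by
      rw [commute_iff_eq, ← map_mul, ← map_mul, mul_comm]))
    δ := (dl, MulOpposite.op (-dl))
    σ :=
      { toFun := fun x => (x.2.unop, MulOpposite.op x.1)
        map_add' := fun x y => rfl
        map_smul' := fun c x => rfl }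
    ρ := AlgHom.fst C _ _
    comm := by
      intro a
      refine Prod.ext ?_ (MulOpposite.unop_injective ?_)
      · ext u
        change d (a * u) = a * d u + d a * u
        rw [hd.leibniz]; ring
      · ext u
        change a * (-(d u)) = -(d (a * u)) + d a * u
        rw [hd.leibniz]; ring
    σσ := fun x => rfl
    σmul := fun x y => rfl
    σμ := fun a => rfl
    σδ := by
      refine Prod.ext rfl (MulOpposite.unop_injective ?_)
      exact (neg_neg dl).symm
    ρμ := fun a f => rfl
    ρδ := fun f => rfl
    closed := by
      intro M a ha
      simp only [hpow]
      exact hlc M a ha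
    const := fun f hf => ⟨⟨f, (hC f).2 hf⟩, rfl⟩ }

/-- Let `F` be a linearly closed differential field of characteristic zero with constants
`C`, and let `K(u) = Σ_{n=0}^N k_n d^n u` be a scalar differential operator of order `N`
(`k_N ≠ 0`).  The coefficient tuples `(p_0,…,p_{N−1}) ∈ F^N` for which the operator
`P(u) = Σ_{n<N} p_n d^n u` makes `K∘P` selfadjoint (i.e. `K(P(u)) = P*(K*(u))` for all
`u`) form a `C`-subspace of `F^N` of dimension `N choose 2`. -/
theorem stmt_7 (F : Type*) [Field F] [CharZero F] (d : F → F) (hd : IsDerivation d)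
    (hlc : LinearlyClosed d)
    (C : Subfield F) (hC : ∀ x : F, x ∈ C ↔ d x = 0)
    (N : ℕ) (k : ℕ → F) (hkN : k N ≠ 0)
    (S : Submodule C (Fin N → F))
    (hS : ∀ p : Fin N → F, p ∈ S ↔ ∀ u : F,
      scalOp d N k (∑ q : Fin N, p q * d^[(q : ℕ)] u)
        = ∑ q : Fin N, (-1 : F) ^ (q : ℕ) * d^[(q : ℕ)] (p q * scalOpAdj d N k u)) :
    Module.rank C S = (N.choose 2 : Cardinal) := by
   
  classical
  let D := mkDOps d hd hlc C hC
  have hpow : ∀ (n : ℕ) (u : F), (D.d ^ n) u = d^[n] u := by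
    intro n u
    rw [Module.End.pow_apply]; rfl
  let T : (Fin N → F) →ₗ[C] (Module.End C F × (Module.End C F)ᵐᵒᵖ) :=
    ∑ q : Fin N, LinearMap.mulRight C (D.δ ^ (q : ℕ)) ∘ₗ D.μ.toLinearMap ∘ₗ LinearMap.proj q
  have hT : ∀ p, T p = ∑ q : Fin N, D.μ (p q) * D.δ ^ (q : ℕ) := by
    intro p
    simp [T, LinearMap.sum_apply]
  have hδ2 : ∀ n : ℕ, ∀ u : F, ((D.δ ^ n).2.unop) u = (-1 : F) ^ n * d^[n] u := by
    have hneg : D.δ.2.unop = -D.d := rfl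
    intro n u
    rw [Prod.pow_snd, MulOpposite.unop_pow, hneg, ← hpow]
    rcases Nat.even_or_odd n with h' | h'
    · rw [h'.neg_pow D.d, h'.neg_one_pow, one_mul]
    · rw [h'.neg_pow D.d, h'.neg_one_pow, neg_one_mul]; rfl
  have hfst : ∀ (a : F) (n : ℕ) (u : F), (D.μ a * D.δ ^ n).1 u = a * d^[n] u := by
    intro a n u
    rw [← hpow]
    change a * ((D.ρ (D.δ ^ n)) u) = _
    rw [map_pow, D.ρδ']
  have hsnd : ∀ (a : F) (n : ℕ) (u : F),
      (D.μ a * D.δ ^ n).2.unop u = (-1 : F) ^ n * d^[n] (a * u) := by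
    intro a n u
    rw [← hδ2]; rfl
  let K := ∑ i ∈ Finset.range (N + 1), D.μ (k i) * D.δ ^ i
  have hK1 : ∀ u, K.1 u = scalOp d N k u := by
    intro u
    simp only [K, Prod.fst_sum, LinearMap.sum_apply, hfst, scalOp]
  have hK2 : ∀ u, K.2.unop u = scalOpAdj d N k u := by
    intro u
    simp only [K, Prod.snd_sum, Finset.unop_sum, LinearMap.sum_apply, hsnd, scalOpAdj]
  have hT1 : ∀ p u, (T p).1 u = ∑ q : Fin N, p q * d^[(q : ℕ)] u := by
    intro p u
    simp only [hT, Prod.fst_sum, LinearMap.sum_apply, hfst]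
  have hT2 : ∀ p u, (T p).2.unop u
      = ∑ q : Fin N, (-1 : F) ^ (q : ℕ) * d^[(q : ℕ)] (p q * u) := by
    intro p u
    simp only [hT, Prod.snd_sum, Finset.unop_sum, LinearMap.sum_apply, hsnd]
  -- independence of coefficients
  have indep : ∀ (n : ℕ) (a : ℕ → F),
      ∑ i ∈ Finset.range n, D.μ (a i) * D.δ ^ i = 0 → ∀ i < n, a i = 0 := by
    intro n
    induction n with
    | zero => intro a _ i hi; omega
    | succ n ih =>
      intro a ha
      have hn : a n = 0 := by
        by_contra hne
        obtain ⟨u, hu⟩ := (D.closed n a hne).1 1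
        rw [← D.ρ_sum, ha] at hu
        simp at hu
      rw [Finset.sum_range_succ, hn, map_zero, zero_mul, add_zero] at ha
      intro i hi
      rcases Nat.lt_succ_iff_lt_or_eq.1 hi with h | rfl
      · exact ih a ha i h
      · exact hn
  have hTr : ∀ a : ℕ → F, T (fun q => a q) = ∑ i ∈ Finset.range N, D.μ (a i) * D.δ ^ i := by
    intro a
    rw [hT, ← Fin.sum_univ_eq_sum_range (fun i => D.μ (a i) * D.δ ^ i)]
  have hext : ∀ p : Fin N → F, ∃ a : ℕ → F, p = fun q : Fin N => a q := by
    intro p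
    exact ⟨fun i => if h : i < N then p ⟨i, h⟩ else 0, by ext q; simp⟩
  have hTinj : Function.Injective T := by
    rw [← LinearMap.ker_eq_bot, LinearMap.ker_eq_bot']
    intro p hp
    obtain ⟨a, rfl⟩ := hext p
    rw [hTr] at hp
    ext q
    exact indep N a hp q q.2
  have hKm : K ∈ D.H (N + 1) := D.sum_mem_H _ _
  have hKn : K ∉ D.H N := by
    intro h
    obtain ⟨b, hb⟩ := D.exists_coeff h
    have := indep (N + 1) (fun i => k i - if i < N then b i else 0) (by
      simp only [map_sub, sub_mul, Finset.sum_sub_distrib]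
      rw [sub_eq_zero]
      change K = _
      rw [hb, Finset.sum_range_succ]
      simp only [lt_irrefl, if_false, map_zero, zero_mul, add_zero]
      refine Finset.sum_congr rfl fun i hi => ?_
      rw [if_pos (Finset.mem_range.1 hi)]) N (by omega)
    simp at this
    exact hkN this
  have hmem : ∀ p, p ∈ S ↔ D.σ (K * T p) = K * T p := by
    intro p
    rw [hS]
    have h1 : ∀ u, (K * T p).1 u = scalOp d N k (∑ q : Fin N, p q * d^[(q : ℕ)] u) := by
      intro u
      rw [← hT1, ← hK1]; rfl
    have h2 : ∀ u, (K * T p).2.unop u = ∑ q : Fin N, (-1 : F) ^ (q : ℕ) *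
        d^[(q : ℕ)] (p q * scalOpAdj d N k u) := by
      intro u
      rw [← hT2 p, ← hK2]; rfl
    simp only [← h1, ← h2]
    generalize K * T p = Z
    constructor
    · intro h
      have h3 : Z.1 = Z.2.unop := LinearMap.ext h
      exact Prod.ext h3.symm (MulOpposite.unop_injective h3)
    · intro h u
      have h3 : Z.2.unop = Z.1 := congrArg Prod.fst h
      rw [h3]
  have hmap : S.map T = D.Sol K N := by
    ext Q
    rw [D.mem_Sol, Submodule.mem_map]
    constructor
    · rintro ⟨p, hp, rfl⟩
      refine ⟨?_, (hmem p).1 hp⟩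
      obtain ⟨a, rfl⟩ := hext p
      rw [hTr]
      exact D.sum_mem_H _ _
    · rintro ⟨hQ, hs⟩
      obtain ⟨a, rfl⟩ := D.exists_coeff hQ
      rw [← hTr] at hs ⊢
      exact ⟨_, (hmem _).2 hs, rfl⟩
  rw [(Submodule.equivMapOfInjective T hTinj S).rank_eq, hmap]
  exact D.rank_Sol hKm hKn
end
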